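/- arXiv:0801.3714 — 5 statements merged into one kernel-verified Lean document; each statement's English description precedes it below -/
import Mathlib

section
/- If G is a bridgeless cubic graph, then for every edge e of G there is a perfect matching F of G with e ∈ F. -/
/-! Multigraphs: vertex type `V`, edge type `E`, incidence map `ends : E → Sym2 V`. -/

namespace Mg

variable {V E : Type}

/-- No loops: no edge has equal endpoints. -/
def NoLoops (ends : E → Sym2 V) : Prop := ∀ e, ¬ (ends e).IsDiag

/-- Cubic: every vertex is incident with exactly three edges. -/
def IsCubic (ends : E → Sym2 V) : Prop := ∀ v, {e | v ∈ ends e}.ncard = 3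

/-- Reachability using only edges in `F`. -/
def Reach (ends : E → Sym2 V) (F : Set E) : V → V → Prop :=
  Relation.ReflTransGen (fun a b => ∃ e ∈ F, ends e = s(a, b))

/-- Connected. -/
def Connected (ends : E → Sym2 V) : Prop := ∀ v w, Reach ends Set.univ v w

/-- Bridgeless: the endpoints of each edge remain joined after its removal. -/
def Bridgeless (ends : E → Sym2 V) : Prop :=
  ∀ e v w, ends e = s(v, w) → Reach ends {f | f ≠ e} v w

/-- A 2-factor: every vertex is incident with exactly two edges of `F`. -/
def IsTwoFactor (ends : E → Sym2 V) (F : Set E) : Prop :=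
  ∀ v, {e | e ∈ F ∧ v ∈ ends e}.ncard = 2

/-- The component of `v` in the spanning subgraph with edge set `F`. -/
def component (ends : E → Sym2 V) (F : Set E) (v : V) : Set V := {w | Reach ends F v w}

/-- Every 2-factor consists only of 5-cycles: each component of any 2-factor
has exactly five vertices. -/
def TwoFactorsAllC5 (ends : E → Sym2 V) : Prop :=
  ∀ F : Set E, IsTwoFactor ends F → ∀ v, (component ends F v).ncard = 5

/-- A perfect matching: every vertex is incident with exactly one edge of `M`. -/
def IsPerfectMatching (ends : E → Sym2 V) (M : Set E) : Prop :=
  ∀ v, ∃! e, e ∈ M ∧ v ∈ ends e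

/-- A cycle of length `n`: `n` distinct vertices and `n` distinct edges, cyclically. -/
def HasCycle (ends : E → Sym2 V) (n : ℕ) : Prop :=
  ∃ (c : ZMod n → V) (f : ZMod n → E), Function.Injective c ∧ Function.Injective f ∧
    ∀ i, ends (f i) = s(c i, c (i + 1))

end Mg

open Classical in
/-- Edge boundary of `X`. -/
noncomputable def Mg.cut {V E : Type} [Fintype V] [Fintype E] (ends : E → Sym2 V)
    (X : Finset V) : Finset E :=
  {f | Odd (Finset.card {x ∈ X | x ∈ ends f})}

open Classical in
lemma Mg.mem_cut {V E : Type} [Fintype V] [Fintype E] {ends : E → Sym2 V}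
    (hl : Mg.NoLoops ends) {X : Finset V} {f : E} :
    f ∈ Mg.cut ends X ↔ ∃ x y, x ∈ X ∧ y ∉ X ∧ ends f = s(x, y) := by
  simp only [Mg.cut, Finset.mem_filter, Finset.mem_univ, true_and]
  have hf := hl f
  revert hf
  induction h : ends f using Sym2.ind with
  | _ p q =>
  intro hpq
  simp only [Sym2.mk_isDiag_iff] at hpq
  have key : ({x ∈ X | x ∈ s(p, q)} : Finset V) = X ∩ {p, q} := by
    ext x; simp
  rw [key]
  by_cases hp : p ∈ X <;> by_cases hq : q ∈ X
  · have : X ∩ {p, q} = {p, q} := by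
      ext x; simp only [Finset.mem_inter, Finset.mem_insert, Finset.mem_singleton]; grind
    rw [this, Finset.card_pair hpq]
    constructor
    · intro h; exact absurd h (by decide)
    · rintro ⟨x, y, hx, hy, h⟩
      simp only [Sym2.eq_iff] at h; grind
  · have : X ∩ {p, q} = {p} := by
      ext x; simp only [Finset.mem_inter, Finset.mem_insert, Finset.mem_singleton]; grind
    rw [this, Finset.card_singleton]
    exact ⟨fun _ => ⟨p, q, hp, hq, rfl⟩, fun _ => by decide⟩
  · have : X ∩ {p, q} = {q} := by
      ext x; simp only [Finset.mem_inter, Finset.mem_insert, Finset.mem_singleton]; grind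
    rw [this, Finset.card_singleton]
    exact ⟨fun _ => ⟨q, p, hq, hp, Sym2.eq_swap⟩, fun _ => by decide⟩
  · have : X ∩ {p, q} = ∅ := by
      ext x; simp only [Finset.mem_inter, Finset.mem_insert, Finset.mem_singleton]; grind
    rw [this, Finset.card_empty]
    constructor
    · intro h; exact absurd h (by decide)
    · rintro ⟨x, y, hx, hy, h⟩
      simp only [Sym2.eq_iff] at h; grind

open Classical in
lemma Mg.card_inc {V E : Type} [Fintype V] [Fintype E] {ends : E → Sym2 V}
    (hc : Mg.IsCubic ends) (v : V) : Finset.card {f : E | v ∈ ends f} = 3 := by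
  rw [← hc v, Set.ncard_eq_toFinset_card']
  congr 1; ext; simp

open Classical in
lemma Mg.odd_cut {V E : Type} [Fintype V] [Fintype E] {ends : E → Sym2 V}
    (hc : Mg.IsCubic ends) {X : Finset V} (hX : Odd X.card) :
    Odd (Mg.cut ends X).card := by
  rw [Mg.cut, ← Finset.odd_sum_iff_odd_card_odd]
  have := Finset.sum_card_bipartiteAbove_eq_sum_card_bipartiteBelow (s := X)
    (t := (Finset.univ : Finset E)) (fun x f => x ∈ ends f)
  simp only [Finset.bipartiteAbove, Finset.bipartiteBelow] at this
  rw [← this, Finset.sum_congr rfl (fun v _ => Mg.card_inc hc v), Finset.sum_const, smul_eq_mul]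
  exact hX.mul (by decide)

lemma Mg.three_le_cut {V E : Type} [Fintype V] [Fintype E] {ends : E → Sym2 V}
    (hl : Mg.NoLoops ends) (hc : Mg.IsCubic ends) (hb : Mg.Bridgeless ends)
    {X : Finset V} (hX : Odd X.card) : 3 ≤ (Mg.cut ends X).card := by
  have h1 := Mg.odd_cut hc hX
  have h2 : (Mg.cut ends X).card ≠ 1 := by
    intro h
    obtain ⟨f, hf⟩ := Finset.card_eq_one.1 h
    obtain ⟨x, y, hx, hy, hxy⟩ := (Mg.mem_cut hl).1 (hf ▸ Finset.mem_singleton_self f)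
    have hr := hb f x y hxy
    apply hy
    clear hy hxy
    unfold Mg.Reach at hr
    induction hr with
    | refl => exact hx
    | tail _ hst ih =>
      obtain ⟨g, hg, hgs⟩ := hst
      by_contra hn
      have : g ∈ Mg.cut ends X := (Mg.mem_cut hl).2 ⟨_, _, ih, hn, hgs⟩
      rw [hf, Finset.mem_singleton] at this
      exact hg this
  obtain ⟨k, hk⟩ := h1
  omega

lemma Mg.even_card {V E : Type} [Fintype V] [Fintype E] {ends : E → Sym2 V}
    (hl : Mg.NoLoops ends) (hc : Mg.IsCubic ends) : Even (Fintype.card V) := by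
  by_contra h
  rw [Nat.not_even_iff_odd] at h
  have h1 := Mg.odd_cut hc (X := Finset.univ) (by simpa using h)
  obtain ⟨f, hf⟩ := Finset.card_pos.1 h1.pos
  obtain ⟨x, y, hx, hy, hxy⟩ := (Mg.mem_cut hl).1 hf
  exact hy (Finset.mem_univ _)

/-- Simple graph on the vertices other than `a`, `b`. -/
def Mg.sg {V E : Type} (ends : E → Sym2 V) (a b : V) :
    SimpleGraph {x : V // x ≠ a ∧ x ≠ b} where
  Adj x y := x ≠ y ∧ ∃ f, ends f = s(x.1, y.1)
  symm := ⟨fun x y h => ⟨h.1.symm, by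
    obtain ⟨f, hf⟩ := h.2
    exact ⟨f, by rw [hf, Sym2.eq_swap]⟩⟩⟩
  loopless := ⟨fun x h => h.1 rfl⟩

open Classical in
lemma Mg.not_violator {V E : Type} [Fintype V] [Fintype E] {ends : E → Sym2 V}
    (hl : Mg.NoLoops ends) (hc : Mg.IsCubic ends) (hb : Mg.Bridgeless ends)
    {e : E} {a b : V} (he : ends e = s(a, b)) (u : Set {x : V // x ≠ a ∧ x ≠ b}) :
    ¬ (Mg.sg ends a b).IsTutteViolator u := by
  intro hv
  have hab : a ≠ b := by
    intro h; apply hl e; rw [he, h]; simp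
  unfold SimpleGraph.IsTutteViolator at hv
  set K := ((⊤ : (Mg.sg ends a b).Subgraph).deleteVerts u) with hK
  have hVe := Mg.even_card hl hc
  have hpar := SimpleGraph.odd_ncard_oddComponents K.coe
  -- the removed set
  let S : Finset V := insert a (insert b ((Set.toFinset u).image Subtype.val))
  have hScard : S.card = u.ncard + 2 := by
    have h0 : ((Set.toFinset u).image Subtype.val).card = u.ncard := by
      rw [Finset.card_image_of_injective _ Subtype.val_injective, Set.ncard_eq_toFinset_card']
    rw [Finset.card_insert_of_notMem, Finset.card_insert_of_notMem, h0]
    · intro h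
      obtain ⟨x, _, hx⟩ := Finset.mem_image.1 h
      exact x.2.2 hx
    · intro h
      rcases Finset.mem_insert.1 h with h | h
      · exact hab h
      obtain ⟨x, _, hx⟩ := Finset.mem_image.1 h
      exact x.2.1 hx
  have hKv : ∀ x : V, x ∉ S ↔ ∃ z : K.verts, z.1.1 = x := by
    intro x
    simp only [S, Finset.mem_insert, Finset.mem_image, Set.mem_toFinset, not_or]
    constructor
    · rintro ⟨h1, h2, h3⟩
      exact ⟨⟨⟨x, h1, h2⟩, by simp [hK]; intro h; exact h3 ⟨_, h, rfl⟩⟩, rfl⟩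
    · rintro ⟨z, rfl⟩
      refine ⟨z.1.2.1, z.1.2.2, ?_⟩
      rintro ⟨w, hw, hwz⟩
      have := z.2
      simp [hK] at this
      exact this (Subtype.ext hwz ▸ hw)
  have hKcard : Nat.card K.verts + S.card = Fintype.card V := by
    have : Nat.card K.verts = (Finset.univ \ S).card := by
      rw [Nat.card_eq_fintype_card, ← Finset.card_univ,
        ← Finset.card_image_of_injective (f := fun z : K.verts => z.1.1) Finset.univ
          (Subtype.val_injective.comp Subtype.val_injective)]
      congr 1; ext x
      simp only [Finset.mem_image, Finset.mem_univ, true_and, Finset.mem_sdiff]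
      exact (hKv x).symm
    rw [this, Finset.card_sdiff_add_card_eq_card (Finset.subset_univ _), Finset.card_univ]
  have hge : S.card ≤ K.coe.oddComponents.ncard := by
    rw [hScard]
    by_contra hlt
    have h1 : K.coe.oddComponents.ncard = u.ncard + 1 := by omega
    rw [h1, ] at hpar
    obtain ⟨k, hk⟩ := hVe
    rw [Nat.odd_iff, Nat.odd_iff] at hpar
    omega
  -- component vertex sets in `V`
  let C : K.coe.ConnectedComponent → Finset V := fun c =>
    (Set.toFinset c.supp).image (fun z => z.1.1)
  have hC : ∀ c x, x ∈ C c ↔ ∃ z : K.verts, K.coe.connectedComponentMk z = c ∧ z.1.1 = x := by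
    intro c x
    simp only [C, Finset.mem_image, Set.mem_toFinset, SimpleGraph.ConnectedComponent.mem_supp_iff]
  have hCS : ∀ c x, x ∈ C c → x ∉ S := by
    intro c x h
    obtain ⟨z, -, hz⟩ := (hC c x).1 h
    exact (hKv x).2 ⟨z, hz⟩
  have hCC : ∀ c d x, x ∈ C c → x ∈ C d → c = d := by
    intro c d x h1 h2
    obtain ⟨z, rfl, hz⟩ := (hC c x).1 h1
    obtain ⟨w, rfl, hw⟩ := (hC d x).1 h2
    have : z = w := Subtype.ext (Subtype.ext (hz.trans hw.symm))
    rw [this]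
  have hout : ∀ c f x y, x ∈ C c → y ∉ C c → ends f = s(x, y) → y ∈ S := by
    intro c f x y hx hy hf
    by_contra hyS
    obtain ⟨w, hw⟩ := (hKv y).1 hyS
    obtain ⟨z, hzc, hz⟩ := (hC c x).1 hx
    apply hy
    refine (hC c y).2 ⟨w, ?_, hw⟩
    rw [← hzc]
    have hzw : K.coe.Adj w z := by
      have hne : w.1 ≠ z.1 := by
        intro h
        apply hy
        rw [← hw, h, hz]; exact hx
      have h1 : (Mg.sg ends a b).Adj w.1 z.1 := ⟨hne, f, by rw [hf, hz, hw, Sym2.eq_swap]⟩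
      have hw2 := w.2
      have hz2 := z.2
      simp only [hK, SimpleGraph.Subgraph.deleteVerts_verts, SimpleGraph.Subgraph.verts_top,
        Set.mem_sdiff, Set.mem_univ, true_and] at hw2 hz2
      have h2 : ((⊤ : (Mg.sg ends a b).Subgraph).deleteVerts u).Adj w.1 z.1 := by
        rw [SimpleGraph.Subgraph.deleteVerts_adj]
        simp [hw2, hz2, h1]
      exact h2
    exact SimpleGraph.ConnectedComponent.sound hzw.reachable
  let O : Finset K.coe.ConnectedComponent := Set.toFinset K.coe.oddComponents
  have hO : O.card = K.coe.oddComponents.ncard := (Set.ncard_eq_toFinset_card' _).symm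
  have h3 : ∀ c ∈ O, 3 ≤ (Mg.cut ends (C c)).card := by
    intro c hcO
    apply Mg.three_le_cut hl hc hb
    have : Odd c.supp.ncard := by simpa [O, SimpleGraph.oddComponents] using hcO
    have hcard : (C c).card = (Set.toFinset c.supp).card :=
      Finset.card_image_of_injective _ (Subtype.val_injective.comp Subtype.val_injective)
    rw [hcard, ← Set.ncard_eq_toFinset_card']
    exact this
  let T : Finset E := S.biUnion (fun v => {f : E | v ∈ ends f})
  have hT : T.card ≤ S.card * 3 :=
    Finset.card_biUnion_le_card_mul _ _ _ (fun v _ => (Mg.card_inc hc v).le)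
  have heT : e ∈ T := by
    simp only [T, Finset.mem_biUnion, Finset.mem_filter, Finset.mem_univ, true_and]
    exact ⟨a, by simp [S], by rw [he]; simp⟩
  have hsub : O.biUnion (fun c => Mg.cut ends (C c)) ⊆ T.erase e := by
    intro f hf
    obtain ⟨c, -, hfc⟩ := Finset.mem_biUnion.1 hf
    obtain ⟨x, y, hx, hy, hxy⟩ := (Mg.mem_cut hl).1 hfc
    refine Finset.mem_erase.2 ⟨?_, ?_⟩
    · rintro rfl
      have hxS := hCS c x hx
      rw [he, Sym2.eq_iff] at hxy
      apply hxS
      simp only [S, Finset.mem_insert]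
      grind
    · simp only [T, Finset.mem_biUnion, Finset.mem_filter, Finset.mem_univ, true_and]
      exact ⟨y, hout c f x y hx hy hxy, by rw [hxy]; simp⟩
  have hdis : (O : Set K.coe.ConnectedComponent).PairwiseDisjoint
      (fun c => Mg.cut ends (C c)) := by
    intro c _ d _ hcd
    refine Finset.disjoint_left.2 ?_
    intro f hfc hfd
    obtain ⟨x, y, hx, hy, hxy⟩ := (Mg.mem_cut hl).1 hfc
    obtain ⟨x', y', hx', hy', hxy'⟩ := (Mg.mem_cut hl).1 hfd
    rw [hxy, Sym2.eq_iff] at hxy'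
    rcases hxy' with ⟨rfl, rfl⟩ | ⟨rfl, rfl⟩
    · exact hcd (hCC c d _ hx hx')
    · exact hCS d _ hx' (hout c f _ _ hx hy hxy)
  have hcount := Finset.card_le_card hsub
  rw [Finset.card_biUnion hdis, Finset.card_erase_of_mem heT] at hcount
  have hsum := Finset.card_nsmul_le_sum O _ 3 h3
  have hpos : 0 < T.card := Finset.card_pos.2 ⟨e, heT⟩
  rw [smul_eq_mul] at hsum
  omega

theorem stmt0 {V E : Type} [Fintype V] [Fintype E] (ends : E → Sym2 V)
    (hl : Mg.NoLoops ends) (hc : Mg.IsCubic ends) (hb : Mg.Bridgeless ends) :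
    ∀ e : E, ∃ M : Set E, Mg.IsPerfectMatching ends M ∧ e ∈ M := by
  classical
  intro e
  obtain ⟨a, b, he⟩ : ∃ a b, ends e = s(a, b) := by
    induction h : ends e using Sym2.ind with
    | _ a b => exact ⟨a, b, rfl⟩
  obtain ⟨P, hP⟩ := SimpleGraph.tutte.2 (fun u => Mg.not_violator hl hc hb he u)
  have hex : ∀ s : Sym2 {x : V // x ≠ a ∧ x ≠ b}, s ∈ P.edgeSet →
      ∃ f, ends f = s.map Subtype.val := by
    intro s
    induction s using Sym2.ind with
    | _ x y =>
      intro h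
      obtain ⟨f, hf⟩ := (P.adj_sub h).2
      exact ⟨f, by simpa using hf⟩
  choose φ hφ using hex
  refine ⟨{f | f = e ∨ ∃ s hs, f = φ s hs}, ?_, Or.inl rfl⟩
  have hno : ∀ s hs v, v ∈ ends (φ s hs) → v ≠ a ∧ v ≠ b := by
    intro s hs v hv
    rw [hφ, Sym2.mem_map] at hv
    obtain ⟨x, -, rfl⟩ := hv
    exact x.2
  intro v
  by_cases hv : v ≠ a ∧ v ≠ b
  · rw [SimpleGraph.Subgraph.isPerfectMatching_iff] at hP
    obtain ⟨w, hw, huniq⟩ := hP ⟨v, hv⟩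
    have hw' : s(⟨v, hv⟩, w) ∈ P.edgeSet := hw
    refine ⟨φ s(⟨v, hv⟩, w) hw', ⟨Or.inr ⟨_, _, rfl⟩, ?_⟩, ?_⟩
    · rw [hφ]; simp
    · rintro f ⟨rfl | ⟨s, hs, rfl⟩, hvf⟩
      · rw [he] at hvf
        simp only [Sym2.mem_iff] at hvf
        tauto
      · rw [hφ, Sym2.mem_map] at hvf
        obtain ⟨x, hx, rfl⟩ := hvf
        obtain ⟨y, rfl⟩ := Sym2.mem_iff_exists.1 hx
        have := huniq y hs
        subst this
        rfl
  · refine ⟨e, ⟨Or.inl rfl, ?_⟩, ?_⟩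
    · rw [he]; simp only [Sym2.mem_iff]; tauto
    · rintro f ⟨rfl | ⟨s, hs, rfl⟩, hvf⟩
      · rfl
      · exact absurd (hno _ _ _ hvf) hv
end

section
/- Let G be a connected bridgeless cubic graph in which every 2-factor consists only of cycles of length five. Then G contains no cycle of length two (i.e., G has no multiple edges). -/
open Classical in
/-- number of ends of `e` in `T` -/
noncomputable def mm {V E : Type} (ends : E → Sym2 V) (e : E) (T : Finset V) : ℕ :=
  (T.filter (fun x => x ∈ ends e)).card

lemma mm_le_two {V E : Type} (ends : E → Sym2 V) (e : E) (T : Finset V) : mm ends e T ≤ 2 := by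
  classical
  unfold mm
  induction h : ends e using Sym2.ind with
  | _ x y =>
    calc _ ≤ ({x, y} : Finset V).card := by
          apply Finset.card_le_card
          intro z hz
          simpa using (Finset.mem_filter.1 hz).2
      _ ≤ 2 := Finset.card_le_two

lemma sum_mm {V E : Type} [Fintype E] (ends : E → Sym2 V) (hc : Mg.IsCubic ends)
    (T : Finset V) : ∑ e, mm ends e T = 3 * T.card := by
  classical
  have h := Finset.sum_card_bipartiteAbove_eq_sum_card_bipartiteBelow
    (s := (Finset.univ : Finset E)) (t := T) (fun e x => x ∈ ends e)
  have h2 : ∀ x ∈ T, (Finset.bipartiteBelow (fun e x => x ∈ ends e) (Finset.univ : Finset E) x).card = 3 := by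
    intro x _
    rw [← hc x, Set.ncard_eq_toFinset_card']
    congr 1
    ext e
    simp [Finset.bipartiteBelow]
  rw [Finset.sum_congr rfl h2] at h
  simp only [Finset.sum_const, smul_eq_mul] at h
  rw [mul_comm, ← h]
  rfl

lemma mm_one {V E : Type} (ends : E → Sym2 V) (hl : Mg.NoLoops ends) (e : E) (T : Finset V) (x y : V)
    (he : ends e = s(x, y)) : mm ends e T = 1 ↔ (x ∈ T ∧ y ∉ T) ∨ (x ∉ T ∧ y ∈ T) := by
  classical
  have hxy : x ≠ y := by
    have := hl e
    rw [he] at this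
    simpa using this
  have : T.filter (fun z => z ∈ ends e) = ({x, y} : Finset V).filter (fun z => z ∈ T) := by
    ext z; simp [he]; tauto
  unfold mm
  rw [this]
  by_cases hx : x ∈ T <;> by_cases hy : y ∈ T <;>
    simp [Finset.filter_insert, Finset.filter_singleton, hx, hy, hxy]

lemma card_even {V E : Type} [Fintype V] [Fintype E] (ends : E → Sym2 V) (hl : Mg.NoLoops ends)
    (hc : Mg.IsCubic ends) : Even (Fintype.card V) := by
  classical
  have h := sum_mm ends hc Finset.univ
  have h2 : ∀ e ∈ (Finset.univ : Finset E), mm ends e Finset.univ = 2 := by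
    intro e _
    induction he : ends e using Sym2.ind with
    | _ x y =>
      have h1 := mm_one ends hl e Finset.univ x y he
      have h3 := mm_le_two ends e Finset.univ
      have h4 : 0 < mm ends e Finset.univ := Finset.card_pos.2 ⟨x, by simp [he]⟩
      simp at h1
      omega
  rw [Finset.sum_congr rfl h2] at h
  simp at h
  rw [Nat.even_iff]
  omega

lemma reach_closed {V E : Type} (ends : E → Sym2 V) (F : Set E) (T : Set V)
    (hT : ∀ e ∈ F, ∀ a b, ends e = s(a, b) → a ∈ T → b ∈ T) (x y : V) (hx : x ∈ T)
    (h : Mg.Reach ends F x y) : y ∈ T := by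
  unfold Mg.Reach at h
  induction h with
  | refl => exact hx
  | tail _ h ih =>
    obtain ⟨e, he, hab⟩ := h
    exact hT e he _ _ hab ih

open Classical in
lemma cut_three {V E : Type} [Fintype E] (ends : E → Sym2 V) (hl : Mg.NoLoops ends)
    (hc : Mg.IsCubic ends) (hb : Mg.Bridgeless ends) (T : Finset V) (hT : Odd T.card) :
    3 ≤ ∑ e, (if mm ends e T = 1 then 1 else 0) := by
  have h := sum_mm ends hc T
  have h2 : ∑ e, mm ends e T = ∑ e, (if mm ends e T = 1 then 1 else 0)
      + 2 * ∑ e, (if mm ends e T = 2 then 1 else 0) := by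
    rw [Finset.mul_sum, ← Finset.sum_add_distrib]
    apply Finset.sum_congr rfl
    intro e _
    have := mm_le_two ends e T
    split_ifs <;> omega
  have h3 : ∑ e, (if mm ends e T = 1 then 1 else 0) ≠ 1 := by
    intro h1
    rw [← Finset.card_filter, Finset.card_eq_one] at h1
    obtain ⟨e, he⟩ := h1
    have hmem : ∀ f, mm ends f T = 1 ↔ f = e := by
      intro f
      have := congrArg (fun s => f ∈ s) he
      simpa using this
    have key : ∀ x y, ends e = s(x, y) → x ∈ T → y ∉ T → False := by
      intro x y hxy hx hy
      refine hy (reach_closed ends {f | f ≠ e} (T : Set V) ?_ x y hx (hb e x y hxy))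
      intro f hf a b hab ha
      by_contra hbT
      exact hf ((hmem f).1 ((mm_one ends hl f T a b hab).2 (Or.inl ⟨ha, hbT⟩)))
    have h1 := (hmem e).2 rfl
    induction hxy : ends e using Sym2.ind with
    | _ x y =>
      rcases (mm_one ends hl e T x y hxy).1 h1 with ⟨hx, hy⟩ | ⟨hx, hy⟩
      · exact key x y hxy hx hy
      · exact key y x (by rw [hxy, Sym2.eq_swap]) hy hx
  rw [Nat.odd_iff] at hT
  omega

lemma count_main {V E ι : Type} [Fintype E] [Fintype ι] (ends : E → Sym2 V) (hl : Mg.NoLoops ends)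
    (hc : Mg.IsCubic ends) (hb : Mg.Bridgeless ends) (S : Finset V) (A : ι → Finset V)
    (hodd : ∀ i, Odd (A i).card) (hdisj : ∀ i j, i ≠ j → Disjoint (A i) (A j))
    (hS : ∀ i, Disjoint (A i) S) (e1 e2 : E)
    (hA : ∀ e, e ≠ e1 → e ≠ e2 → ∀ x y, ends e = s(x, y) → ∀ i, x ∈ A i → y ∈ A i ∨ y ∈ S) :
    3 * Fintype.card ι ≤ 3 * S.card + 4 := by
  classical
  have hunion : ∀ e, ∑ i, mm ends e (A i) + mm ends e S ≤ 2 := by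
    intro e
    have h1 : mm ends e (Finset.univ.biUnion A ∪ S) = ∑ i, mm ends e (A i) + mm ends e S := by
      unfold mm
      rw [Finset.filter_union, Finset.card_union_of_disjoint, Finset.filter_biUnion,
        Finset.card_biUnion]
      · intro i _ j _ hij
        exact (hdisj i j hij).mono (Finset.filter_subset _ _) (Finset.filter_subset _ _)
      · refine Disjoint.mono (Finset.filter_subset _ _) (Finset.filter_subset _ _) ?_
        rw [Finset.disjoint_biUnion_left]
        exact fun i _ => hS i
    rw [← h1]
    exact mm_le_two _ _ _
  have hle : ∀ e, ∑ i, (if mm ends e (A i) = 1 then 1 else 0) ≤ ∑ i, mm ends e (A i) := by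
    intro e
    apply Finset.sum_le_sum
    intro i _
    split_ifs <;> omega
  have hedge : ∀ e, ∑ i, (if mm ends e (A i) = 1 then 1 else 0) ≤
      mm ends e S + ((if e = e1 then 2 else 0) + (if e = e2 then 2 else 0)) := by
    intro e
    have h1 := hunion e
    have h2 := hle e
    by_cases he1 : e = e1
    · rw [if_pos he1]; omega
    by_cases he2 : e = e2
    · rw [if_pos he2]; omega
    by_cases h0 : mm ends e S = 0
    · have : ∀ i, mm ends e (A i) ≠ 1 := by
        intro i hi
        have hnS : ∀ z ∈ ends e, z ∉ S := by
          intro z hz hzS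
          have := Finset.card_eq_zero.1 h0
          have h3 : z ∈ S.filter (fun x => x ∈ ends e) := Finset.mem_filter.2 ⟨hzS, hz⟩
          rw [this] at h3
          simp at h3
        induction hxy : ends e using Sym2.ind with
        | _ x y =>
          rcases (mm_one ends hl e (A i) x y hxy).1 hi with ⟨hx, hy⟩ | ⟨hx, hy⟩
          · rcases hA e he1 he2 x y hxy i hx with h | h
            · exact hy h
            · exact hnS y (by simp [hxy]) h
          · rcases hA e he1 he2 y x (by rw [hxy, Sym2.eq_swap]) i hy with h | h
            · exact hx h
            · exact hnS x (by simp [hxy]) h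
      simp [this]
    · omega
  have h1 : ∑ i : ι, 3 ≤ ∑ i, ∑ e, (if mm ends e (A i) = 1 then 1 else 0) :=
    Finset.sum_le_sum fun i _ => cut_three ends hl hc hb (A i) (hodd i)
  rw [Finset.sum_comm] at h1
  have h2 := h1.trans (Finset.sum_le_sum fun e _ => hedge e)
  rw [Finset.sum_add_distrib, Finset.sum_add_distrib, sum_mm ends hc] at h2
  simp at h2
  omega

/-- The simple graph underlying `G - e1 - e2`. -/
def HH {V E : Type} (ends : E → Sym2 V) (hl : Mg.NoLoops ends) (e1 e2 : E) : SimpleGraph V where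
  Adj x y := ∃ e, e ≠ e1 ∧ e ≠ e2 ∧ ends e = s(x, y)
  symm := ⟨by
    rintro x y ⟨e, h1, h2, h⟩
    exact ⟨e, h1, h2, by rw [h, Sym2.eq_swap]⟩⟩
  loopless := ⟨by
    rintro x ⟨e, _, _, h⟩
    apply hl e
    simp [h]⟩

lemma exists_pm {V E : Type} [Fintype V] [Fintype E] (ends : E → Sym2 V)
    (hl : Mg.NoLoops ends) (hc : Mg.IsCubic ends) (hb : Mg.Bridgeless ends) (e1 e2 : E) :
    ∃ M : (HH ends hl e1 e2).Subgraph, M.IsPerfectMatching := by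
  classical
  rw [SimpleGraph.tutte]
  intro S hS
  unfold SimpleGraph.IsTutteViolator at hS
  set K := ((⊤ : (HH ends hl e1 e2).Subgraph).deleteVerts S).coe with hK
  have hpar := K.odd_ncard_oddComponents
  have hcard : Nat.card ((⊤ : (HH ends hl e1 e2).Subgraph).deleteVerts S).verts + S.ncard
      = Fintype.card V := by
    have : ((⊤ : (HH ends hl e1 e2).Subgraph).deleteVerts S).verts = Sᶜ := by
      ext; simp
    rw [this, Nat.card_coe_set_eq, add_comm, Set.ncard_add_ncard_compl, Nat.card_eq_fintype_card]
  have hev := card_even ends hl hc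
  have hm := count_main (ι := K.oddComponents) ends hl hc hb S.toFinset
    (fun c => (Subtype.val '' c.1.supp).toFinset) ?_ ?_ ?_ e1 e2 ?_
  · have h1 : Fintype.card K.oddComponents = K.oddComponents.ncard := by
      rw [← Nat.card_eq_fintype_card, Nat.card_coe_set_eq]
    rw [h1, ← Set.ncard_eq_toFinset_card'] at hm
    rw [Nat.odd_iff, Nat.odd_iff] at hpar
    rw [Nat.even_iff] at hev
    omega
  · intro c
    rw [← Set.ncard_eq_toFinset_card', Set.ncard_image_of_injective _ Subtype.val_injective]
    exact c.2
  · intro c d hcd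
    rw [Set.disjoint_toFinset, Set.disjoint_image_iff Subtype.val_injective]
    rw [Set.disjoint_left]
    intro x hx hy
    exact hcd (Subtype.ext (hx.symm.trans hy))
  · intro c
    rw [Set.disjoint_toFinset, Set.disjoint_left]
    rintro _ ⟨x, _, rfl⟩
    exact x.2.2
  · intro e h1 h2 x y hxy c hx
    by_cases hyS : y ∈ S
    · right; simpa using hyS
    left
    rw [Set.mem_toFinset] at hx ⊢
    obtain ⟨x, hx, rfl⟩ := hx
    refine ⟨⟨y, by simpa using hyS⟩, ?_, rfl⟩
    refine c.1.mem_supp_of_adj_mem_supp hx ?_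
    have hxS := x.2.2
    have hadj : (HH ends hl e1 e2).Adj x.1 y := ⟨e, h1, h2, hxy⟩
    simp [hK, hadj, hxS, hyS]

lemma exists_tf {V E : Type} [Fintype V] [Fintype E] (ends : E → Sym2 V)
    (hl : Mg.NoLoops ends) (hc : Mg.IsCubic ends) (hb : Mg.Bridgeless ends) (e1 e2 : E) :
    ∃ F : Set E, Mg.IsTwoFactor ends F ∧ e1 ∈ F ∧ e2 ∈ F := by
  classical
  obtain ⟨M, hM⟩ := exists_pm ends hl hc hb e1 e2
  have hch : ∀ s : M.edgeSet, ∃ e, e ≠ e1 ∧ e ≠ e2 ∧ ends e = s.1 := by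
    rintro ⟨s, hs⟩
    induction s using Sym2.ind with
    | _ x y => exact M.adj_sub hs
  choose g hg1 hg2 hg using hch
  refine ⟨(Set.range g)ᶜ, ?_, ?_, ?_⟩
  · intro v
    obtain ⟨w, hw, huniq⟩ := SimpleGraph.Subgraph.isPerfectMatching_iff.1 hM v
    have : {e | e ∈ (Set.range g)ᶜ ∧ v ∈ ends e} = {e | v ∈ ends e} \ {g ⟨s(v, w), hw⟩} := by
      ext e
      simp only [Set.mem_setOf_eq, Set.mem_compl_iff, Set.mem_diff, Set.mem_singleton_iff]
      constructor
      · rintro ⟨h1, h2⟩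
        exact ⟨h2, fun h => h1 ⟨_, h.symm⟩⟩
      · rintro ⟨h1, h2⟩
        refine ⟨?_, h1⟩
        rintro ⟨⟨s, hs⟩, rfl⟩
        apply h2
        rw [hg] at h1
        obtain ⟨z, rfl⟩ := Sym2.mem_iff_exists.1 h1
        have := huniq z hs
        subst this
        rfl
    rw [this, Set.ncard_diff_singleton_of_mem, hc v]
    simp [hg]
  · rintro ⟨s, hs⟩
    exact hg1 s hs
  · rintro ⟨s, hs⟩
    exact hg2 s hs

theorem stmt3 {V E : Type} [Fintype V] [Fintype E] (ends : E → Sym2 V)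
    (hl : Mg.NoLoops ends) (hc : Mg.IsCubic ends) (hb : Mg.Bridgeless ends)
    (hconn : Mg.Connected ends) (h5 : Mg.TwoFactorsAllC5 ends) :
    ¬ Mg.HasCycle ends 2 := by
  classical
  rintro ⟨c, f, hci, hfi, hcyc⟩
  obtain ⟨F, hF, h0, h1⟩ := exists_tf ends hl hc hb (f 0) (f 1)
  have he0 : ends (f 0) = s(c 0, c 1) := by simpa using hcyc 0
  have he1 : ends (f 1) = s(c 0, c 1) := by
    have := hcyc 1
    rw [show (1 + 1 : ZMod 2) = 0 from rfl] at this
    rw [this, Sym2.eq_swap]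
  have hne : f 0 ≠ f 1 := fun h => by
    have := hfi h
    exact absurd this (by decide)
  have hkey : ∀ v, v ∈ s(c 0, c 1) → ∀ e ∈ F, v ∈ ends e → ends e = s(c 0, c 1) := by
    intro v hv e he hve
    have hsub : ({f 0, f 1} : Set E) ⊆ {e | e ∈ F ∧ v ∈ ends e} := by
      rintro x (rfl | rfl)
      · exact ⟨h0, he0 ▸ hv⟩
      · exact ⟨h1, he1 ▸ hv⟩
    have heq := Set.eq_of_subset_of_ncard_le hsub (by rw [hF v, Set.ncard_pair hne])
    have : e ∈ ({f 0, f 1} : Set E) := by rw [heq]; exact ⟨he, hve⟩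
    rcases this with rfl | rfl
    · exact he0
    · exact he1
  have hsub : Mg.component ends F (c 0) ⊆ {c 0, c 1} := by
    intro w hw
    refine reach_closed ends F {c 0, c 1} ?_ (c 0) w (by simp) hw
    intro e he a b hab ha
    have := hkey a (by simpa using ha) e he (by simp [hab])
    have hb' : b ∈ ends e := by simp [hab]
    rw [this] at hb'
    simpa using hb'
  have h2 := Set.ncard_le_ncard hsub
  rw [h5 F hF] at h2
  have h3 := Set.ncard_insert_le (c 0) {c 1}
  rw [Set.ncard_singleton] at h3
  omega
end

section
/- Let G be a connected bridgeless cubic graph in which every 2-factor consists only of 5-cycles. Then G does not contain two triangles sharing an edge. -/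
namespace Mg

/-- Edges leaving `S`. -/
def cut_s4 {V E : Type} (ends : E → Sym2 V) (S : Set V) : Set E :=
  {e | ∃ v w, ends e = s(v, w) ∧ v ∈ S ∧ w ∉ S}

open Classical in
theorem cut_parity {V E : Type} [Fintype V] [Fintype E] (ends : E → Sym2 V)
    (hl : NoLoops ends) (hc : IsCubic ends) (S : Set V) (hS : Odd S.ncard) :
    Odd (cut_s4 ends S).ncard := by
  have h1 := Finset.sum_card_bipartiteAbove_eq_sum_card_bipartiteBelow
    (s := S.toFinset) (t := (Finset.univ : Finset E)) (fun v e => v ∈ ends e)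
  have h2 : ∑ a ∈ S.toFinset, (Finset.bipartiteAbove (fun v e => v ∈ ends e)
      (Finset.univ : Finset E) a).card = S.ncard * 3 := by
    rw [Finset.sum_const_nat (m := 3), Set.ncard_eq_toFinset_card']
    intro v _
    rw [← hc v, Set.ncard_eq_toFinset_card']
    congr 1
    ext e
    simp [Finset.bipartiteAbove]
  have h3 : Odd (∑ b ∈ (Finset.univ : Finset E), (Finset.bipartiteBelow (fun v e => v ∈ ends e)
      S.toFinset b).card) := by
    rw [← h1, h2]
    exact hS.mul (by decide)
  rw [Finset.odd_sum_iff_odd_card_odd] at h3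
  convert h3 using 1
  rw [Set.ncard_eq_toFinset_card']
  congr 1
  ext e
  rw [Set.mem_toFinset, Finset.mem_filter]
  simp only [Finset.mem_univ, true_and]
  change (∃ v w, ends e = s(v, w) ∧ v ∈ S ∧ w ∉ S) ↔ _
  have hd := hl e
  obtain ⟨x, y, h⟩ : ∃ x y, ends e = s(x, y) := by
    induction ends e with
    | _ x y => exact ⟨x, y, rfl⟩
  · rw [h] at hd
    have hxy : x ≠ y := by simpa using hd
    have key : Finset.bipartiteBelow (fun v e => v ∈ ends e) S.toFinset e
        = ({x, y} : Finset V).filter (· ∈ S) := by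
      ext v
      simp [Finset.bipartiteBelow, h, and_comm]
    rw [key]
    by_cases hx : x ∈ S <;> by_cases hy : y ∈ S <;>
      simp [h, Finset.filter_insert, Finset.filter_singleton, hx, hy, hxy] <;> grind

theorem cut_ne_singleton {V E : Type} (ends : E → Sym2 V)
    (hb : Bridgeless ends) (S : Set V) (g : E) (h : cut_s4 ends S = {g}) : False := by
  have hg : g ∈ cut_s4 ends S := by simp [h]
  obtain ⟨v, w, hvw, hv, hw⟩ := hg
  have hr := hb g v w hvw
  apply hw
  clear hw hvw
  unfold Reach at hr
  induction hr with
  | refl => exact hv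
  | tail _ h2 ih =>
    obtain ⟨e, he, hee⟩ := h2
    by_contra hn
    have : e ∈ cut_s4 ends S := ⟨_, _, hee, ih, hn⟩
    rw [h] at this
    exact he this

theorem cut_ge {V E : Type} [Fintype V] [Fintype E] (ends : E → Sym2 V)
    (hl : NoLoops ends) (hc : IsCubic ends) (hb : Bridgeless ends) (S : Set V)
    (hS : Odd S.ncard) : 3 ≤ (cut_s4 ends S).ncard := by
  have h1 := cut_parity ends hl hc S hS
  have h2 : (cut_s4 ends S).ncard ≠ 1 := by
    intro h
    obtain ⟨g, hg⟩ := Set.ncard_eq_one.1 h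
    exact cut_ne_singleton ends hb S g hg
  obtain ⟨k, hk⟩ := h1
  omega

theorem cut_one {V E : Type} [Fintype V] [Fintype E] (ends : E → Sym2 V)
    (hl : NoLoops ends) (hc : IsCubic ends) (hb : Bridgeless ends) (S : Set V)
    (hS : Odd S.ncard) (g : E) (h : ∀ e, ∀ v w, ends e = s(v, w) → v ∈ S → w ∉ S → e = g) :
    False := by
  have h1 := cut_ge ends hl hc hb S hS
  have h2 : cut_s4 ends S ⊆ {g} := by
    rintro e ⟨v, w, h1, h2, h3⟩
    exact h e v w h1 h2 h3
  have := Set.ncard_le_ncard h2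
  rw [Set.ncard_singleton] at this
  omega

/-- The underlying simple graph. -/
def toSimple {V E : Type} (ends : E → Sym2 V) (hl : NoLoops ends) : SimpleGraph V where
  Adj a b := ∃ e, ends e = s(a, b)
  symm := ⟨fun a b ⟨e, he⟩ => ⟨e, he.trans Sym2.eq_swap⟩⟩
  loopless := ⟨fun a ⟨e, he⟩ => hl e (by rw [he]; simp)⟩

open Classical in
theorem petersen_simple {V E : Type} [Fintype V] [Fintype E] (ends : E → Sym2 V)
    (hl : NoLoops ends) (hc : IsCubic ends) (hb : Bridgeless ends) :
    ∃ M : (toSimple ends hl).Subgraph, M.IsPerfectMatching := by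
  rw [SimpleGraph.tutte]
  intro u hu
  unfold SimpleGraph.IsTutteViolator at hu
  set H := ((⊤ : (toSimple ends hl).Subgraph).deleteVerts u) with hH
  let S : H.coe.ConnectedComponent → Set V := fun C => Subtype.val '' C.supp
  let T : H.coe.ConnectedComponent → Finset E := fun C => (cut_s4 ends (S C)).toFinset
  let O := H.coe.oddComponents.toFinset
  -- edges leaving a component end in u
  have hout : ∀ C, ∀ e v w, ends e = s(v, w) → v ∈ S C → w ∉ S C → w ∈ u := by
    rintro C e v w he ⟨⟨v, hv⟩, hvC, rfl⟩ hw
    by_contra hwu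
    apply hw
    have hwH : w ∈ H.verts := by simp [hH, hwu]
    refine ⟨⟨w, hwH⟩, ?_, rfl⟩
    have hadj : H.coe.Adj ⟨v, hv⟩ ⟨w, hwH⟩ := by
      have : v ∉ u := by simpa [hH] using hv
      simp [hH, SimpleGraph.Subgraph.deleteVerts_adj, hwu, this]
      exact ⟨e, he⟩
    exact C.mem_supp_of_adj_mem_supp hvC hadj
  have hSu : ∀ C v, v ∈ S C → v ∉ u := by
    rintro C v ⟨⟨v, hv⟩, hvC, rfl⟩
    simpa [hH] using hv
  have h3 : ∀ C ∈ O, 3 ≤ (T C).card := by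
    intro C hC
    rw [← Set.ncard_eq_toFinset_card']
    apply cut_ge ends hl hc hb
    have : Odd C.supp.ncard := by simpa [O, SimpleGraph.oddComponents] using hC
    rwa [Set.ncard_image_of_injective _ Subtype.val_injective]
  have hdisj : ∀ C ∈ O, ∀ D ∈ O, C ≠ D → Disjoint (T C) (T D) := by
    intro C _ D _ hCD
    rw [Finset.disjoint_left]
    intro e heC heD
    simp only [T, Set.mem_toFinset] at heC heD
    obtain ⟨v, w, h1, h2, h3⟩ := heC
    obtain ⟨v', w', h1', h2', h3'⟩ := heD
    have hw := hout C e v w h1 h2 h3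
    have hw' := hout D e v' w' h1' h2' h3'
    have hv := hSu _ _ h2
    have hv' := hSu _ _ h2'
    have : v = v' := by
      rw [h1] at h1'
      rcases Sym2.eq_iff.1 h1' with ⟨h, _⟩ | ⟨h, _⟩
      · exact h
      · subst h; exact absurd hw' hv
    subst this
    obtain ⟨x, hx, hxv⟩ := h2
    obtain ⟨y, hy, hyv⟩ := h2'
    have : x = y := Subtype.ext (hxv.trans hyv.symm)
    subst this
    apply hCD
    rw [SimpleGraph.ConnectedComponent.mem_supp_iff] at hx hy
    exact hx.symm.trans hy
  have hle1 : O.card * 3 ≤ (O.biUnion T).card := by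
    rw [Finset.card_biUnion hdisj]
    exact Finset.card_nsmul_le_sum O _ 3 h3
  have hle2 : (O.biUnion T).card ≤ u.toFinset.card * 3 := by
    refine le_trans (Finset.card_le_card (t := u.toFinset.biUnion
      (fun v => {e | v ∈ ends e}.toFinset)) ?_) (Finset.card_biUnion_le_card_mul _ _ _ ?_)
    · intro e he
      simp only [Finset.mem_biUnion, T, Set.mem_toFinset] at he ⊢
      obtain ⟨C, _, v, w, h1, h2, h3⟩ := he
      exact ⟨w, hout C e v w h1 h2 h3, by simp [h1]⟩
    · intro v _
      rw [← Set.ncard_eq_toFinset_card', hc v]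
  rw [Set.ncard_eq_toFinset_card' u, Set.ncard_eq_toFinset_card'] at hu
  change _ < O.card at hu
  omega

theorem petersen {V E : Type} [Fintype V] [Fintype E] (ends : E → Sym2 V)
    (hl : NoLoops ends) (hc : IsCubic ends) (hb : Bridgeless ends) :
    ∃ M : Set E, IsPerfectMatching ends M := by
  obtain ⟨M, hM⟩ := petersen_simple ends hl hc hb
  rw [SimpleGraph.Subgraph.isPerfectMatching_iff] at hM
  have hch : ∀ s : Sym2 V, ∃ e, s ∈ M.edgeSet → ends e = s := by
    intro s
    by_cases hs : s ∈ M.edgeSet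
    · induction s with
      | _ x y =>
        obtain ⟨e, he⟩ := M.adj_sub (SimpleGraph.Subgraph.mem_edgeSet.1 hs)
        exact ⟨e, fun _ => he⟩
    · by_cases hE : Nonempty E
      · exact ⟨hE.some, fun h => absurd h hs⟩
      · exfalso
        induction s with
        | _ x y =>
          obtain ⟨w, hw, _⟩ := hM x
          obtain ⟨e, he⟩ := M.adj_sub hw
          exact hE ⟨e⟩
  choose ch hch using hch
  refine ⟨{e | ends e ∈ M.edgeSet ∧ e = ch (ends e)}, fun v => ?_⟩
  obtain ⟨w, hw, huniq⟩ := hM v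
  have hs : s(v, w) ∈ M.edgeSet := hw
  refine ⟨ch s(v, w), ⟨⟨?_, ?_⟩, ?_⟩, ?_⟩
  · rw [hch _ hs]; exact hs
  · rw [hch _ hs]
  · rw [hch _ hs]; simp
  · rintro e ⟨⟨h1, h2⟩, h3⟩
    obtain ⟨w', hw'⟩ := Sym2.mem_iff_exists.1 h3
    rw [hw'] at h1 h2
    have := huniq w' h1
    subst this
    exact h2

theorem twoFactor_compl {V E : Type} [Fintype V] [Fintype E] (ends : E → Sym2 V)
    (hc : IsCubic ends) (M : Set E) (hM : IsPerfectMatching ends M) :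
    IsTwoFactor ends Mᶜ := by
  intro v
  obtain ⟨m, ⟨hm, hvm⟩, hu⟩ := hM v
  have h : {e | e ∈ Mᶜ ∧ v ∈ ends e} = {e | v ∈ ends e} \ {m} := by
    ext e
    simp only [Set.mem_setOf_eq, Set.mem_compl_iff, Set.mem_diff, Set.mem_singleton_iff]
    constructor
    · rintro ⟨h1, h2⟩
      exact ⟨h2, fun h => h1 (h ▸ hm)⟩
    · rintro ⟨h1, h2⟩
      exact ⟨fun h => h2 (hu e ⟨h, h1⟩), h1⟩
  rw [h, Set.ncard_diff_singleton_of_mem (by exact hvm), hc v]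

theorem third {V E : Type} [Fintype V] [Fintype E] (ends : E → Sym2 V)
    (hc : IsCubic ends) (v : V) (e f : E) (he : v ∈ ends e) (hf : v ∈ ends f) (hne : e ≠ f) :
    ∃ g, v ∈ ends g ∧ g ≠ e ∧ g ≠ f ∧ ∀ k, v ∈ ends k → k = e ∨ k = f ∨ k = g := by
  obtain ⟨x, y, z, hxy, hxz, hyz, h⟩ := Set.ncard_eq_three.1 (hc v)
  have hk : ∀ k, v ∈ ends k ↔ k = x ∨ k = y ∨ k = z := by
    intro k
    have : k ∈ {e | v ∈ ends e} ↔ k ∈ ({x, y, z} : Set E) := by rw [h]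
    simpa using this
  clear h hc
  have hx := (hk x).2 (by simp)
  have hy := (hk y).2 (by simp)
  have hz := (hk z).2 (by simp)
  rcases (hk e).1 he with rfl | rfl | rfl <;> rcases (hk f).1 hf with rfl | rfl | rfl
  · exact absurd rfl hne
  · exact ⟨z, hz, hxz.symm, hyz.symm, fun k h => by have := (hk k).1 h; tauto⟩
  · exact ⟨y, hy, hxy.symm, hyz, fun k h => by have := (hk k).1 h; tauto⟩
  · exact ⟨z, hz, hyz.symm, hxz.symm, fun k h => by have := (hk k).1 h; tauto⟩
  · exact absurd rfl hne
  · exact ⟨x, hx, hxy, hxz, fun k h => by have := (hk k).1 h; tauto⟩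
  · exact ⟨y, hy, hyz, hxy.symm, fun k h => by have := (hk k).1 h; tauto⟩
  · exact ⟨x, hx, hxz, hxy, fun k h => by have := (hk k).1 h; tauto⟩
  · exact absurd rfl hne

theorem three {V E : Type} [Fintype V] [Fintype E] (ends : E → Sym2 V)
    (hc : IsCubic ends) (v : V) (e f g : E) (he : v ∈ ends e) (hf : v ∈ ends f)
    (hg : v ∈ ends g) (h1 : e ≠ f) (h2 : e ≠ g) (h3 : f ≠ g) :
    ∀ k, v ∈ ends k → k = e ∨ k = f ∨ k = g := by
  obtain ⟨z, _, _, _, h⟩ := third ends hc v e f he hf h1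
  intro k hk
  have := h g hg
  have := h k hk
  grind

theorem triangle {V E : Type} (ends : E → Sym2 V) (c : ZMod 3 → V) (f : ZMod 3 → E)
    (hci : Function.Injective c) (hf : ∀ i, ends (f i) = s(c i, c (i + 1)))
    (e : E) (he : e ∈ Set.range f) (a b : V) (hab : ends e = s(a, b)) :
    ∃ p e1 e2, p ≠ a ∧ p ≠ b ∧ ends e1 = s(b, p) ∧ ends e2 = s(a, p) ∧
      Set.range f = {e, e1, e2} := by
  obtain ⟨i, rfl⟩ := he
  have hr : Set.range f = {f i, f (i + 1), f (i + 2)} := by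
    ext x
    simp only [Set.mem_range, Set.mem_insert_iff, Set.mem_singleton_iff]
    constructor
    · rintro ⟨j, rfl⟩
      have : ∀ i j : ZMod 3, j = i ∨ j = i + 1 ∨ j = i + 2 := by decide
      rcases this i j with h | h | h <;> simp [h]
    · rintro (h | h | h) <;> exact ⟨_, h.symm⟩
  have h0 := hf i
  have h1 := hf (i + 1)
  have h2 := hf (i + 2)
  have e1 : ∀ i : ZMod 3, i + 1 + 1 = i + 2 := by decide
  have e2 : ∀ i : ZMod 3, i + 2 + 1 = i := by decide
  have d1 : ∀ i : ZMod 3, i + 2 ≠ i := by decide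
  have d2 : ∀ i : ZMod 3, i + 2 ≠ i + 1 := by decide
  rw [e1] at h1
  rw [e2] at h2
  rw [h0] at hab
  rcases Sym2.eq_iff.1 hab with ⟨rfl, rfl⟩ | ⟨rfl, rfl⟩
  · exact ⟨c (i + 2), f (i + 1), f (i + 2), hci.ne (d1 i), hci.ne (d2 i), h1,
      h2.trans Sym2.eq_swap, hr⟩
  · exact ⟨c (i + 2), f (i + 2), f (i + 1), hci.ne (d2 i), hci.ne (d1 i),
      h2.trans Sym2.eq_swap, h1, by rw [hr]; grind⟩

/-- Two triangles on the same vertex set. -/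
theorem same_apex {V E : Type} [Fintype V] [Fintype E] (ends : E → Sym2 V)
    (hl : NoLoops ends) (hc : IsCubic ends) (hb : Bridgeless ends)
    (a b p : V) (e e1 e2 e1' : E) (hab : a ≠ b) (hpa : p ≠ a) (hpb : p ≠ b)
    (he : ends e = s(a, b)) (h1 : ends e1 = s(b, p)) (h2 : ends e2 = s(a, p))
    (h1' : ends e1' = s(b, p)) (hne : e1 ≠ e1') : False := by
  have n1 : e ≠ e1 := by rintro rfl; rw [he] at h1; grind [Sym2.eq_iff]
  have n2 : e ≠ e1' := by rintro rfl; rw [he] at h1'; grind [Sym2.eq_iff]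
  have n3 : e ≠ e2 := by rintro rfl; rw [he] at h2; grind [Sym2.eq_iff]
  have n4 : e2 ≠ e1 := by rintro rfl; rw [h2] at h1; grind [Sym2.eq_iff]
  have n5 : e2 ≠ e1' := by rintro rfl; rw [h2] at h1'; grind [Sym2.eq_iff]
  have hB := three ends hc b e e1 e1' (by simp [he]) (by simp [h1]) (by simp [h1']) n1 n2 hne
  have hP := three ends hc p e2 e1 e1' (by simp [h2]) (by simp [h1]) (by simp [h1']) n4 n5 hne
  obtain ⟨g, -, -, -, hA⟩ := third ends hc a e e2 (by simp [he]) (by simp [h2]) n3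
  have hcard : ({a, b, p} : Set V).ncard = 3 :=
    Set.ncard_eq_three.2 ⟨a, b, p, hab, hpa.symm, hpb.symm, rfl⟩
  refine cut_one ends hl hc hb {a, b, p} (by rw [hcard]; decide) g ?_
  intro k v w hk hv hw
  have hvk : v ∈ ends k := by simp [hk]
  have hwk : w ∈ ends k := by simp [hk]
  have hin : ∀ x y, ends k = s(x, y) → x ∈ ({a, b, p} : Set V) → y ∈ ({a, b, p} : Set V) →
      False := by
    intro x y hxy hx hy
    rw [hxy, Sym2.mem_iff] at hwk
    rcases hwk with rfl | rfl <;> exact hw (by assumption)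
  simp only [Set.mem_insert_iff, Set.mem_singleton_iff] at hv hin
  rcases hv with rfl | rfl | rfl
  · rcases hA k hvk with rfl | rfl | rfl
    · exact (hin _ _ he (by simp) (by simp)).elim
    · exact (hin _ _ h2 (by simp) (by simp)).elim
    · rfl
  · rcases hB k hvk with rfl | rfl | rfl
    · exact (hin _ _ he (by simp) (by simp)).elim
    · exact (hin _ _ h1 (by simp) (by simp)).elim
    · exact (hin _ _ h1' (by simp) (by simp)).elim
  · rcases hP k hvk with rfl | rfl | rfl
    · exact (hin _ _ h2 (by simp) (by simp)).elim
    · exact (hin _ _ h1 (by simp) (by simp)).elim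
    · exact (hin _ _ h1' (by simp) (by simp)).elim

/-- A set closed under `F`-edges contains the component. -/
theorem component_subset {V E : Type} (ends : E → Sym2 V) (F : Set E) (S : Set V) (a : V)
    (ha : a ∈ S) (h : ∀ e ∈ F, ∀ v w, ends e = s(v, w) → v ∈ S → w ∈ S) :
    component ends F a ⊆ S := by
  intro w hw
  simp only [component, Reach, Set.mem_setOf_eq] at hw
  induction hw with
  | refl => exact ha
  | tail _ h2 ih =>
    obtain ⟨e, he, hee⟩ := h2
    exact h e he _ _ hee ih

set_option maxHeartbeats 4000000 in
/-- The diamond. -/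
theorem diamond {V E : Type} [Fintype V] [Fintype E] (ends : E → Sym2 V)
    (hl : NoLoops ends) (hc : IsCubic ends) (hb : Bridgeless ends)
    (h5 : TwoFactorsAllC5 ends)
    (a b p q : V) (e e1 e2 e1' e2' : E) (hab : a ≠ b) (hpa : p ≠ a) (hpb : p ≠ b)
    (hqa : q ≠ a) (hqb : q ≠ b) (hpq : p ≠ q)
    (he : ends e = s(a, b)) (h1 : ends e1 = s(b, p)) (h2 : ends e2 = s(a, p))
    (h1' : ends e1' = s(b, q)) (h2' : ends e2' = s(a, q)) : False := by
  obtain ⟨M, hM⟩ := petersen ends hl hc hb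
  have hC := h5 _ (twoFactor_compl ends hc M hM) a
  have me : ∀ v, v ∈ ends e ↔ v = a ∨ v = b := by simp [he]
  have me1 : ∀ v, v ∈ ends e1 ↔ v = b ∨ v = p := by simp [h1]
  have me2 : ∀ v, v ∈ ends e2 ↔ v = a ∨ v = p := by simp [h2]
  have me1' : ∀ v, v ∈ ends e1' ↔ v = b ∨ v = q := by simp [h1']
  have me2' : ∀ v, v ∈ ends e2' ↔ v = a ∨ v = q := by simp [h2']
  have n1 : e ≠ e1 := by rintro rfl; have := me a; have := me1 a; grind
  have n2 : e ≠ e2 := by rintro rfl; have := me b; have := me2 b; grind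
  have n3 : e ≠ e1' := by rintro rfl; have := me a; have := me1' a; grind
  have n4 : e ≠ e2' := by rintro rfl; have := me b; have := me2' b; grind
  have n5 : e1 ≠ e2 := by rintro rfl; have := me1 a; have := me2 a; grind
  have n6 : e1 ≠ e1' := by rintro rfl; have := me1 p; have := me1' p; grind
  have n7 : e2 ≠ e2' := by rintro rfl; have := me2 p; have := me2' p; grind
  have n8 : e1' ≠ e2' := by rintro rfl; have := me1' a; have := me2' a; grind
  have hA := three ends hc a e e2 e2' (by simp [he]) (by simp [h2]) (by simp [h2']) n2 n4 n7
  have hB := three ends hc b e e1 e1' (by simp [he]) (by simp [h1]) (by simp [h1']) n1 n3 n6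
  obtain ⟨g, hpg, hg1, hg2, hP⟩ := third ends hc p e1 e2 (by simp [h1]) (by simp [h2]) n5
  obtain ⟨h, hqh, hh1, hh2, hQ⟩ := third ends hc q e1' e2' (by simp [h1']) (by simp [h2']) n8
  -- uniqueness and existence in M
  have uq : ∀ v k l, k ∈ M → l ∈ M → v ∈ ends k → v ∈ ends l → k = l :=
    fun v k l hk hl' hvk hvl => (hM v).unique ⟨hk, hvk⟩ ⟨hl', hvl⟩
  have ex : ∀ v, ∃ k, k ∈ M ∧ v ∈ ends k := fun v => (hM v).exists
  -- any edge at two of the four, etc.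
  have hcard4 : ({a, b, p, q} : Set V).ncard ≤ 4 := by
    classical
    have := Set.ncard_le_ncard (s := ({a, b, p, q} : Set V))
      (t := (({a, b, p, q} : Finset V) : Set V)) (by intro x; simp)
    rw [Set.ncard_coe_finset] at this
    exact this.trans Finset.card_le_four
  have hclosed : ¬ (∀ k ∈ Mᶜ, ∀ v w, ends k = s(v, w) → v ∈ ({a, b, p, q} : Set V) →
      w ∈ ({a, b, p, q} : Set V)) := by
    intro hcl
    have hsub := component_subset ends Mᶜ {a, b, p, q} a (by simp) hcl
    have := Set.ncard_le_ncard hsub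
    omega
  have memS : ∀ v, v ∈ ({a, b, p, q} : Set V) ↔ v = a ∨ v = b ∨ v = p ∨ v = q := by simp
  -- edges at the four vertices
  have hcut : ∀ k v w, ends k = s(v, w) → v ∈ ({a, b, p, q} : Set V) →
      w ∈ ({a, b, p, q} : Set V) ∨ (k = g ∧ v = p) ∨ (k = h ∧ v = q) := by
    intro k v w hk hv
    have hvk : v ∈ ends k := by simp [hk]
    have hwk : w ∈ ends k := by simp [hk]
    rw [memS] at hv ⊢
    rcases hv with rfl | rfl | rfl | rfl
    · have := hA k hvk; grind
    · have := hB k hvk; grind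
    · have := hP k hvk; grind
    · have := hQ k hvk; grind
  by_cases heM : e ∈ M
  · apply hclosed
    intro k hk v w hkvw hv
    have hgM : g ∈ M := by
      obtain ⟨k, hkM, hpk⟩ := ex p
      have := hP k hpk
      have := uq a e e2 heM
      have := uq b e e1 heM
      grind
    have hhM : h ∈ M := by
      obtain ⟨k, hkM, hpk⟩ := ex q
      have := hQ k hpk
      have := uq a e e2' heM
      have := uq b e e1' heM
      grind
    rcases hcut k v w hkvw hv with h' | ⟨rfl, _⟩ | ⟨rfl, _⟩
    · exact h'
    · exact absurd hgM hk
    · exact absurd hhM hk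
  · have hcase : (e2 ∈ M ∧ e1' ∈ M ∧ e1 ∉ M ∧ e2' ∉ M) ∨
        (e2' ∈ M ∧ e1 ∈ M ∧ e2 ∉ M ∧ e1' ∉ M) := by
      obtain ⟨k, hkM, hak⟩ := ex a
      obtain ⟨l, hlM, hbl⟩ := ex b
      have := hA k hak
      have := hB l hbl
      have := uq p e1 e2
      have := uq q e1' e2'
      have := uq a e2 e2'
      have := uq b e1 e1'
      grind
    have hgM : g ∉ M := by
      intro hg
      have := uq p g e1 hg
      have := uq p g e2 hg
      grind
    have hhM : h ∉ M := by
      intro hh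
      have := uq q h e1' hh
      have := uq q h e2' hh
      grind
    obtain ⟨x, hgx⟩ := Sym2.mem_iff_exists.1 hpg
    obtain ⟨y, hhy⟩ := Sym2.mem_iff_exists.1 hqh
    have mg : ∀ v, v ∈ ends g ↔ v = p ∨ v = x := by simp [hgx]
    have mh : ∀ v, v ∈ ends h ↔ v = q ∨ v = y := by simp [hhy]
    have hxp : x ≠ p := by
      rintro rfl; apply hl g; rw [hgx]; simp
    have hyq : y ≠ q := by
      rintro rfl; apply hl h; rw [hhy]; simp
    have hxa : x ≠ a := by
      rintro rfl; have := hA g (by simp [hgx]); grind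
    have hxb : x ≠ b := by
      rintro rfl; have := hB g (by simp [hgx]); grind
    have hya : y ≠ a := by
      rintro rfl; have := hA h (by simp [hhy]); grind
    have hyb : y ≠ b := by
      rintro rfl; have := hB h (by simp [hhy]); grind
    have hgh : g ≠ h := by
      rintro rfl
      have hxq : x = q := by have := mg q; grind
      have hyp : y = p := by have := mh p; grind
      apply hclosed
      intro k hk v w hkvw hv
      rcases hcut k v w hkvw hv with h' | ⟨rfl, rfl⟩ | ⟨rfl, rfl⟩
      · exact h'
      · have := mg w
        have : w ∈ ends k := by simp [hkvw]
        rw [memS]; grind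
      · have := mg w
        have : w ∈ ends k := by simp [hkvw]
        rw [memS]; grind
    have hxq : x ≠ q := by
      rintro rfl; have := hQ g (by simp [hgx]); grind
    have hyp : y ≠ p := by
      rintro rfl; have := hP h (by simp [hhy]); grind
    have hstep : ∀ k v w, k ∉ M → ends k = s(v, w) → v ∈ component ends Mᶜ a →
        w ∈ component ends Mᶜ a := by
      intro k v w hk hkvw hv
      exact Relation.ReflTransGen.tail hv ⟨k, hk, hkvw⟩
    have ca : a ∈ component ends Mᶜ a := Relation.ReflTransGen.refl
    have cb := hstep e a b heM he ca
    have cp : p ∈ component ends Mᶜ a := by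
      rcases hcase with ⟨_, _, h', _⟩ | ⟨_, _, h', _⟩
      · exact hstep _ _ _ h' h1 cb
      · exact hstep _ _ _ h' h2 ca
    have cq : q ∈ component ends Mᶜ a := by
      rcases hcase with ⟨_, _, _, h'⟩ | ⟨_, _, _, h'⟩
      · exact hstep _ _ _ h' h2' ca
      · exact hstep _ _ _ h' h1' cb
    have cx := hstep _ _ _ hgM hgx cp
    have cy := hstep _ _ _ hhM hhy cq
    have hxy : x = y := by
      by_contra hxy
      classical
      have hsub : (({a, b, p, q, x, y} : Finset V) : Set V) ⊆ component ends Mᶜ a := by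
        intro v hv
        simp only [Finset.coe_insert, Finset.coe_singleton, Set.mem_insert_iff,
          Set.mem_singleton_iff] at hv
        rcases hv with rfl | rfl | rfl | rfl | rfl | rfl <;> assumption
      have hle := Set.ncard_le_ncard hsub
      rw [Set.ncard_coe_finset, hC] at hle
      have : ({a, b, p, q, x, y} : Finset V).card = 6 := by
        repeat rw [Finset.card_insert_of_notMem (by simp; grind)]
        simp
      omega
    subst hxy
    obtain ⟨k, -, -, -, hX⟩ := third ends hc x g h (by simp [hgx]) (by simp [hhy]) hgh
    have hcard : Odd ({a, b, p, q, x} : Set V).ncard := by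
      classical
      have h0 : ({a, b, p, q, x} : Set V) = (({a, b, p, q, x} : Finset V) : Set V) := by simp
      have : ({a, b, p, q, x} : Finset V).card = 5 := by
        repeat rw [Finset.card_insert_of_notMem (by simp; grind)]
        simp
      rw [h0, Set.ncard_coe_finset, this]
      decide
    refine cut_one ends hl hc hb {a, b, p, q, x} hcard k ?_
    intro l v w hlvw hv hw
    have memS' : ∀ v, v ∈ ({a, b, p, q, x} : Set V) ↔ v = a ∨ v = b ∨ v = p ∨ v = q ∨ v = x := by
      simp
    rw [memS'] at hv hw
    have hvl : v ∈ ends l := by simp [hlvw]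
    have hwl : w ∈ ends l := by simp [hlvw]
    clear memS' hlvw hstep hcut memS hclosed hcard4 uq ex hcase hC ca cb cp cq cx cy hcard
    clear he h1 h2 h1' h2' hgx hhy
    rcases hv with rfl | rfl | rfl | rfl | rfl
    · have := hA l hvl; grind
    · have := hB l hvl; grind
    · have := hP l hvl; grind
    · have := hQ l hvl; grind
    · have := hX l hvl; grind

end Mg

theorem stmt4 {V E : Type} [Fintype V] [Fintype E] (ends : E → Sym2 V)
    (hl : Mg.NoLoops ends) (hc : Mg.IsCubic ends) (hb : Mg.Bridgeless ends)
    (hconn : Mg.Connected ends) (h5 : Mg.TwoFactorsAllC5 ends) :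
    ¬ ∃ (c c' : ZMod 3 → V) (f f' : ZMod 3 → E),
      (Function.Injective c ∧ Function.Injective f ∧
        ∀ i, ends (f i) = s(c i, c (i + 1))) ∧
      (Function.Injective c' ∧ Function.Injective f' ∧
        ∀ i, ends (f' i) = s(c' i, c' (i + 1))) ∧
      Set.range f ≠ Set.range f' ∧ (Set.range f ∩ Set.range f').Nonempty := by
  rintro ⟨c, c', f, f', ⟨hci, -, hf⟩, ⟨hci', -, hf'⟩, hne, e, hef, hef'⟩
  obtain ⟨a, b, he⟩ : ∃ a b, ends e = s(a, b) := by
    obtain ⟨i, rfl⟩ := hef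
    exact ⟨_, _, hf i⟩
  have hab : a ≠ b := by
    rintro rfl; apply hl e; rw [he]; simp
  obtain ⟨p, e1, e2, hpa, hpb, h1, h2, hr⟩ := Mg.triangle ends c f hci hf e hef a b he
  obtain ⟨q, e1', e2', hqa, hqb, h1', h2', hr'⟩ := Mg.triangle ends c' f' hci' hf' e hef' a b he
  by_cases hpq : p = q
  · subst hpq
    by_cases n1 : e1 = e1'
    · by_cases n2 : e2 = e2'
      · apply hne; rw [hr, hr', n1, n2]
      · exact Mg.same_apex ends hl hc hb b a p e e2 e1 e2' hab.symm hpb hpa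
          (he.trans Sym2.eq_swap) h2 h1 h2' n2
    · exact Mg.same_apex ends hl hc hb a b p e e1 e2 e1' hab hpa hpb he h1 h2 h1' n1
  · exact Mg.diamond ends hl hc hb h5 a b p q e e1 e2 e1' e2' hab hpa hpb hqa hqb hpq
      he h1 h2 h1' h2'
end

section
/- Let G be a connected bridgeless cubic graph in which every 2-factor consists only of 5-cycles. Then G contains no triangle. -/
namespace Mg
variable {V E : Type}

lemma closed_component {ends : E → Sym2 V} {F : Set E} {x : V} {P : Set V} (hx : x ∈ P)
    (hP : ∀ e ∈ F, ∀ a b, ends e = s(a, b) → a ∈ P → b ∈ P) : component ends F x ⊆ P := by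
  intro w hw
  change Relation.ReflTransGen _ _ _ at hw
  induction hw with
  | refl => exact hx
  | tail _ h ih =>
    obtain ⟨e, he, h⟩ := h
    exact hP e he _ _ h ih

lemma cubic_cases [Finite E] {ends : E → Sym2 V} (hc : IsCubic ends) {w : V} {e₁ e₂ e₃ : E}
    (h1 : w ∈ ends e₁) (h2 : w ∈ ends e₂) (h3 : w ∈ ends e₃) (h12 : e₁ ≠ e₂) (h13 : e₁ ≠ e₃)
    (h23 : e₂ ≠ e₃) {e : E} (he : w ∈ ends e) : e = e₁ ∨ e = e₂ ∨ e = e₃ := by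
  have h : ({e₁, e₂, e₃} : Set E) = {e | w ∈ ends e} := by
    apply Set.eq_of_subset_of_ncard_le
    · rintro f (rfl | rfl | rfl) <;> assumption
    · rw [hc w, Set.ncard_eq_three.2 ⟨_, _, _, h12, h13, h23, rfl⟩]
    · exact Set.toFinite _
  have : e ∈ ({e₁, e₂, e₃} : Set E) := h ▸ he
  simpa using this

lemma two_cases [Finite E] {ends : E → Sym2 V} {F : Set E} (hc : IsTwoFactor ends F) {w : V}
    {e₁ e₂ : E} (h1 : w ∈ ends e₁) (h2 : w ∈ ends e₂) (f1 : e₁ ∈ F) (f2 : e₂ ∈ F)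
    (h12 : e₁ ≠ e₂) {e : E} (he : e ∈ F) (he' : w ∈ ends e) : e = e₁ ∨ e = e₂ := by
  have h : ({e₁, e₂} : Set E) = {e | e ∈ F ∧ w ∈ ends e} := by
    apply Set.eq_of_subset_of_ncard_le
    · rintro f (rfl | rfl) <;> constructor <;> assumption
    · rw [hc w, Set.ncard_pair h12]
    · exact Set.toFinite _
  have : e ∈ ({e₁, e₂} : Set E) := h ▸ ⟨he, he'⟩
  simpa using this

lemma two_other [Finite E] {ends : E → Sym2 V} {F : Set E} (hc : IsTwoFactor ends F) {w : V}
    (e₁ : E) : ∃ e ∈ F, w ∈ ends e ∧ e ≠ e₁ := by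
  obtain ⟨a, b, hab, h⟩ := Set.ncard_eq_two.1 (hc w)
  have ha : a ∈ {e | e ∈ F ∧ w ∈ ends e} := by rw [h]; simp
  have hb : b ∈ {e | e ∈ F ∧ w ∈ ends e} := by rw [h]; simp
  by_cases h : a = e₁
  · exact ⟨b, hb.1, hb.2, by grind [-Sym2.eq]⟩
  · exact ⟨a, ha.1, ha.2, h⟩

lemma third_edge [Finite E] {ends : E → Sym2 V} (hc : IsCubic ends) (w : V) (e₁ e₂ : E) :
    ∃ e t, ends e = s(w, t) ∧ e ≠ e₁ ∧ e ≠ e₂ := by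
  obtain ⟨a, b, c, hab, hac, hbc, h⟩ := Set.ncard_eq_three.1 (hc w)
  have ha : a ∈ {e | w ∈ ends e} := by rw [h]; simp
  have hb : b ∈ {e | w ∈ ends e} := by rw [h]; simp
  have hc : c ∈ {e | w ∈ ends e} := by rw [h]; simp
  have : ∃ e, w ∈ ends e ∧ e ≠ e₁ ∧ e ≠ e₂ := by
    by_cases h1 : a = e₁ ∨ a = e₂
    · by_cases h2 : b = e₁ ∨ b = e₂
      · exact ⟨c, hc, by grind [-Sym2.eq]⟩
      · exact ⟨b, hb, by grind [-Sym2.eq]⟩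
    · exact ⟨a, ha, by grind [-Sym2.eq]⟩
  obtain ⟨e, ⟨t, ht⟩, h⟩ := this
  exact ⟨e, t, ht, h⟩

lemma compl_twoFactor [Finite E] {ends : E → Sym2 V} (hc : IsCubic ends) {M : Set E}
    (hM : IsPerfectMatching ends M) : IsTwoFactor ends Mᶜ := by
  intro v
  obtain ⟨e, he, hu⟩ := hM v
  have : {f | f ∈ Mᶜ ∧ v ∈ ends f} = {f | v ∈ ends f} \ {e} := by
    ext f
    simp only [Set.mem_compl_iff, Set.mem_ofPred_eq, Set.mem_sdiff, Set.mem_singleton_iff]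
    constructor
    · rintro ⟨h1, h2⟩
      exact ⟨h2, fun h => h1 (h ▸ he.1)⟩
    · rintro ⟨h1, h2⟩
      exact ⟨fun h => h2 (hu f ⟨h, h1⟩), h1⟩
  rw [this, Set.ncard_sdiff_singleton_of_mem (by exact he.2), hc v]

lemma ne_of_mem {ends : E → Sym2 V} {e f : E} {v : V} (h : v ∈ ends e) (h' : v ∉ ends f) :
    e ≠ f := by
  rintro rfl; exact h' h

lemma mem_of {ends : E → Sym2 V} {e : E} {a b : V} (h : ends e = s(a, b)) :
    ∀ v, v ∈ ends e ↔ v = a ∨ v = b := by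
  intro v; rw [h, Sym2.mem_iff]

lemma tri_step [Finite V] [Finite E] {ends : E → Sym2 V} (hl : NoLoops ends)
    (hc : IsCubic ends) (h5 : TwoFactorsAllC5 ends)
    {x y z x' y' z' : V} {a b d ex ey ez : E} (hxy : x ≠ y) (hyz : y ≠ z) (hxz : x ≠ z)
    (ha : ends a = s(x, y)) (hb : ends b = s(y, z)) (hd : ends d = s(z, x))
    (hex : ends ex = s(x, x')) (hey : ends ey = s(y, y')) (hez : ends ez = s(z, z'))
    (h1 : ex ≠ a) (h2 : ex ≠ d) (h3 : ey ≠ a) (h4 : ey ≠ b) (h5' : ez ≠ b) (h6 : ez ≠ d)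
    {M : Set E} (hM : IsPerfectMatching ends M) (hexM : ex ∈ M) :
    ∃ g, g ∉ M ∧ ey ∉ M ∧ ends g = s(y', z') ∧ y' ≠ z' ∧ y' ≠ x ∧ y' ≠ y ∧ y' ≠ z ∧
      z' ≠ x ∧ z' ≠ y ∧ z' ≠ z := by
  have hF := compl_twoFactor hc hM
  have uniq : ∀ v e f, e ∈ M → f ∈ M → v ∈ ends e → v ∈ ends f → e = f := fun v e f he hf hve hvf =>
    (hM v).unique ⟨he, hve⟩ ⟨hf, hvf⟩
  have ma := mem_of ha
  have mb := mem_of hb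
  have md := mem_of hd
  have mey := mem_of hey
  have mez := mem_of hez
  have hab : a ≠ b := ne_of_mem (ends := ends) (v := x) (by simp [*]) (by grind [-Sym2.eq])
  have had : a ≠ d := ne_of_mem (ends := ends) (v := y) (by simp [*]) (by grind [-Sym2.eq])
  have hbd : b ≠ d := ne_of_mem (ends := ends) (v := y) (by simp [*]) (by grind [-Sym2.eq])
  have haM : a ∉ M := fun h => h1 (uniq x _ _ hexM h (by simp [hex]) (by simp [ha]))
  have hdM : d ∉ M := fun h => h2 (uniq x _ _ hexM h (by simp [hex]) (by simp [hd]))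
  have cx : ∀ e ∉ M, x ∈ ends e → e = a ∨ e = d := fun e he hx =>
    two_cases hF (by simp [ha]) (by simp [hd]) haM hdM had he hx
  have small : ∀ P : Set V, x ∈ P → (∀ e ∉ M, ∀ s t, ends e = s(s, t) → s ∈ P → t ∈ P) →
      5 ≤ P.ncard := by
    intro P hx hP
    rw [← h5 _ hF x]
    exact Set.ncard_le_ncard (closed_component hx hP) (Set.toFinite _)
  have small3 : ∀ p q r : V, ({p, q, r} : Set V).ncard ≤ 3 := fun p q r => by
    classical
    have := Finset.card_le_three (a := p) (b := q) (c := r)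
    rw [← Set.ncard_coe_finset] at this; simpa using this
  have small4 : ∀ p q r s : V, ({p, q, r, s} : Set V).ncard ≤ 4 := fun p q r s => by
    classical
    have := Finset.card_le_four (a := p) (b := q) (c := r) (d := s)
    rw [← Set.ncard_coe_finset] at this; simpa using this
  have hbM : b ∈ M := by
    by_contra hbM
    have cy : ∀ e ∉ M, y ∈ ends e → e = a ∨ e = b := fun e he hx =>
      two_cases hF (by simp [ha]) (by simp [hb]) haM hbM hab he hx
    have cz : ∀ e ∉ M, z ∈ ends e → e = b ∨ e = d := fun e he hx =>
      two_cases hF (by simp [hb]) (by simp [hd]) hbM hdM hbd he hx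
    have := small {x, y, z} (by simp) (by
      intro e he s t hst hs
      have hs' : s ∈ ends e := by simp [hst]
      have ht' : t ∈ ends e := by simp [hst]
      have : e = a ∨ e = b ∨ e = d := by
        rcases hs with rfl | rfl | rfl <;> grind [-Sym2.eq]
      simp only [Set.mem_insert_iff, Set.mem_singleton_iff]
      rcases this with rfl | rfl | rfl <;> grind [-Sym2.eq])
    have := small3 x y z
    omega
  have heyM : ey ∉ M := fun h => h4 (uniq y _ _ h hbM (by simp [hey]) (by simp [hb]))
  have hezM : ez ∉ M := fun h => h5' (uniq z _ _ h hbM (by simp [hez]) (by simp [hb]))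
  have cy : ∀ e ∉ M, y ∈ ends e → e = a ∨ e = ey := fun e he hx =>
    two_cases hF (by simp [ha]) (by simp [hey]) haM heyM h3.symm he hx
  have cz : ∀ e ∉ M, z ∈ ends e → e = d ∨ e = ez := fun e he hx =>
    two_cases hF (by simp [hd]) (by simp [hez]) hdM hezM h6.symm he hx
  have y'y : y' ≠ y := by rintro rfl; exact hl ey (by simp [hey])
  have z'z : z' ≠ z := by rintro rfl; exact hl ez (by simp [hez])
  have y'x : y' ≠ x := by
    rintro rfl
    rcases cx ey heyM (by simp [hey]) with h | h
    · exact h3 h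
    · have := (md y).1 (h ▸ (mey y).2 (.inl rfl)); grind [-Sym2.eq]
  have z'x : z' ≠ x := by
    rintro rfl
    rcases cx ez hezM (by simp [hez]) with h | h
    · have := (ma z).1 (h ▸ (mez z).2 (.inl rfl)); grind [-Sym2.eq]
    · exact h6 h
  have eyz : ey ≠ ez := by
    rintro rfl
    have := small {x, y, z} (by simp) (by
      intro e he s t hst hs
      have hs' : s ∈ ends e := by simp [hst]
      have ht' : t ∈ ends e := by simp [hst]
      have : e = a ∨ e = ey ∨ e = d := by
        rcases hs with rfl | rfl | rfl <;> grind [-Sym2.eq]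
      simp only [Set.mem_insert_iff, Set.mem_singleton_iff]
      rcases this with rfl | rfl | rfl <;> grind [-Sym2.eq])
    have := small3 x y z
    omega
  have y'z : y' ≠ z := by
    rintro rfl
    rcases cz ey heyM (by simp [hey]) with h | h
    · have := (md y).1 (h ▸ (mey y).2 (.inl rfl)); grind [-Sym2.eq]
    · exact eyz h
  have z'y : z' ≠ y := by
    rintro rfl
    rcases cy ez hezM (by simp [hez]) with h | h
    · have := (ma z).1 (h ▸ (mez z).2 (.inl rfl)); grind [-Sym2.eq]
    · exact eyz h.symm
  have y'z' : y' ≠ z' := by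
    rintro rfl
    have cw : ∀ e ∉ M, y' ∈ ends e → e = ey ∨ e = ez := fun e he hx =>
      two_cases hF (by simp [hey]) (by simp [hez]) heyM hezM eyz he hx
    have := small {x, y, z, y'} (by simp) (by
      intro e he s t hst hs
      have hs' : s ∈ ends e := by simp [hst]
      have ht' : t ∈ ends e := by simp [hst]
      have : e = a ∨ e = ey ∨ e = d ∨ e = ez := by
        rcases hs with rfl | rfl | rfl | rfl <;> grind [-Sym2.eq]
      simp only [Set.mem_insert_iff, Set.mem_singleton_iff]
      rcases this with rfl | rfl | rfl | rfl <;> grind [-Sym2.eq])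
    have := small4 x y z y'
    omega
  obtain ⟨g, hgM, ⟨p, hgp⟩, hge⟩ := two_other hF (w := y') ey
  have hcomp : ({x, y, z, y', z'} : Set V) = component ends Mᶜ x := by
    have ry : Reach ends Mᶜ x y := .single ⟨a, haM, ha⟩
    have rz : Reach ends Mᶜ x z := .single ⟨d, hdM, by rw [hd, Sym2.eq_swap]⟩
    have ry' : Reach ends Mᶜ x y' := .tail ry ⟨ey, heyM, hey⟩
    have rz' : Reach ends Mᶜ x z' := .tail rz ⟨ez, hezM, hez⟩
    apply Set.eq_of_subset_of_ncard_le
    · rintro w (rfl | rfl | rfl | rfl | rfl)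
      · exact .refl
      all_goals assumption
    · rw [h5 _ hF x]
      repeat rw [Set.ncard_insert_of_notMem (by simp; grind [-Sym2.eq]) (Set.toFinite _)]
      simp
    · exact Set.toFinite _
  have hp : p ∈ component ends Mᶜ x := by
    have : Reach ends Mᶜ x y' := by
      have h : y' ∈ ({x, y, z, y', z'} : Set V) := by simp
      rw [hcomp] at h
      exact h
    exact .tail this ⟨g, hgM, hgp⟩
  rw [← hcomp] at hp
  have hpg : p ∈ ends g := by simp [hgp]
  have hpy : y' ∈ ends g := by simp [hgp]
  have : p = z' := by
    rcases hp with rfl | rfl | rfl | rfl | rfl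
    · rcases cx g hgM hpg with rfl | rfl <;> grind [-Sym2.eq]
    · rcases cy g hgM hpg with rfl | rfl <;> grind [-Sym2.eq]
    · rcases cz g hgM hpg with rfl | rfl <;> grind [-Sym2.eq]
    · exact absurd (by simp [hgp]) (hl g)
    · rfl
  subst this
  exact ⟨g, hgM, heyM, hgp, y'z', y'x, y'y, y'z, z'x, z'y, z'z⟩

lemma no_triangle [Finite V] [Finite E] {ends : E → Sym2 V} (hl : NoLoops ends)
    (hc : IsCubic ends) (h5 : TwoFactorsAllC5 ends)
    (hpm : ∀ e, ∃ M, IsPerfectMatching ends M ∧ e ∈ M) : ¬ HasCycle ends 3 := by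
  rintro ⟨c, f, hci, hfi, h⟩
  have ha := h 0
  have hb := h 1
  have hd := h 2
  rw [show (0 + 1 : ZMod 3) = 1 by decide] at ha
  rw [show (1 + 1 : ZMod 3) = 2 by decide] at hb
  rw [show (2 + 1 : ZMod 3) = 0 by decide] at hd
  have hxy : c 0 ≠ c 1 := fun h => absurd (hci h) (by decide)
  have hyz : c 1 ≠ c 2 := fun h => absurd (hci h) (by decide)
  have hxz : c 0 ≠ c 2 := fun h => absurd (hci h) (by decide)
  generalize c 0 = x at *
  generalize c 1 = y at *
  generalize c 2 = z at *
  generalize f 0 = a at *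
  generalize f 1 = b at *
  generalize f 2 = d at *
  obtain ⟨ex, x', hex, h1, h2⟩ := third_edge hc x a d
  obtain ⟨ey, y', hey, h3, h4⟩ := third_edge hc y a b
  obtain ⟨ez, z', hez, h5', h6⟩ := third_edge hc z b d
  obtain ⟨M, hM, hMx⟩ := hpm ex
  obtain ⟨My, hMy, hMy'⟩ := hpm ey
  obtain ⟨Mz, hMz, hMz'⟩ := hpm ez
  obtain ⟨g1, g1M, eyM, hg1, y'z', y'x, y'y, y'z, z'x, z'y, z'z⟩ :=
    tri_step hl hc h5 hxy hyz hxz ha hb hd hex hey hez h1 h2 h3 h4 h5' h6 hM hMx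
  obtain ⟨g2, -, -, hg2, z'x', -, -, -, x'y, x'z, x'x⟩ :=
    tri_step hl hc h5 hyz hxz.symm hxy.symm hb hd ha hey hez hex h4 h3 h5' h6 h2 h1 hMy hMy'
  obtain ⟨g3, -, -, hg3, x'y', -⟩ :=
    tri_step hl hc h5 hxz.symm hxy hyz.symm hd ha hb hez hex hey h6 h5' h2 h1 h3 h4 hMz hMz'
  have mex := mem_of hex
  have mey := mem_of hey
  have mg1 := mem_of hg1
  have mg3 := mem_of hg3
  have n1 : ey ≠ g1 := ne_of_mem (ends := ends) (v := y) (by simp [*]) (by grind [-Sym2.eq])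
  have n2 : ey ≠ g3 := ne_of_mem (ends := ends) (v := y) (by simp [*]) (by grind [-Sym2.eq])
  have n3 : g1 ≠ g3 := ne_of_mem (ends := ends) (v := z') (by simp [*]) (by grind [-Sym2.eq])
  obtain ⟨m, ⟨hm, hm'⟩, -⟩ := hM y'
  rcases cubic_cases hc (by simp [hey]) (by simp [hg1]) (by simp [hg3]) n1 n2 n3 hm' with
    rfl | rfl | rfl
  · exact eyM hm
  · exact g1M hm
  · have := (hM x').unique ⟨hm, by simp [hg3]⟩ ⟨hMx, by simp [hex]⟩
    subst this
    have := (mg3 x).1 ((mex x).2 (.inl rfl))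
    grind [-Sym2.eq]
end Mg

namespace Mg
section count
variable {V E : Type} [Fintype V] [Fintype E]

open Classical in
/-- Number of ends of `e` inside `K`. -/
noncomputable def cnt (ends : E → Sym2 V) (K : Finset V) (e : E) : ℕ :=
  (K.filter (fun v => v ∈ ends e)).card

open Classical in
/-- Edge boundary of `K`. -/
noncomputable def bd (ends : E → Sym2 V) (K : Finset V) : Finset E :=
  Finset.univ.filter (fun e => cnt ends K e = 1)

lemma sum_cnt {ends : E → Sym2 V} (hc : IsCubic ends) (K : Finset V) :
    ∑ e, cnt ends K e = 3 * K.card := by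
  classical
  have := Finset.sum_card_bipartiteAbove_eq_sum_card_bipartiteBelow (s := K)
    (t := (Finset.univ : Finset E)) (fun v e => v ∈ ends e)
  unfold cnt
  simp only [Finset.bipartiteAbove, Finset.bipartiteBelow] at this
  rw [show (3 * K.card) = ∑ v ∈ K, 3 by simp [mul_comm]]
  calc _ = _ := by congr!
    _ = _ := this.symm
    _ = _ := by
      refine Finset.sum_congr rfl fun v _ => ?_
      rw [← hc v, ← Set.ncard_coe_finset]
      congr 1
      ext; simp

open Classical in
lemma cnt_eq {ends : E → Sym2 V} (K : Finset V) {e : E} {p q : V} (h : ends e = s(p, q))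
    (hpq : p ≠ q) : cnt ends K e = (if p ∈ K then 1 else 0) + (if q ∈ K then 1 else 0) := by
  have : K.filter (fun v => v ∈ ends e) = ({p, q} : Finset V).filter (fun v => v ∈ K) := by
    ext v
    simp [h, and_comm]
  unfold cnt
  rw [show (K.filter (fun v => v ∈ ends e)).card = _ from congrArg _ this]
  rw [Finset.card_filter, Finset.sum_pair hpq]

lemma exists_ends {ends : E → Sym2 V} (hl : NoLoops ends) (e : E) :
    ∃ p q, ends e = s(p, q) ∧ p ≠ q := by
  have := hl e
  induction h : ends e with | _ p q
  refine ⟨p, q, rfl, ?_⟩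
  rintro rfl
  exact this (by simp [h])

lemma cnt_le {ends : E → Sym2 V} (hl : NoLoops ends) (K : Finset V) (e : E) :
    cnt ends K e ≤ 2 := by
  obtain ⟨p, q, h, hpq⟩ := exists_ends hl e
  rw [cnt_eq K h hpq]
  split_ifs <;> omega

/-- A boundary edge has exactly one end inside. -/
lemma cnt_one {ends : E → Sym2 V} (hl : NoLoops ends) {K : Finset V} {e : E}
    (h1 : cnt ends K e = 1) : ∃ p q, ends e = s(p, q) ∧ p ≠ q ∧ p ∈ K ∧ q ∉ K := by
  obtain ⟨p, q, h, hpq⟩ := exists_ends hl e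
  rw [cnt_eq K h hpq] at h1
  by_cases hp : p ∈ K
  · by_cases hq : q ∈ K
    · simp [hp, hq] at h1
    · exact ⟨p, q, h, hpq, hp, hq⟩
  · by_cases hq : q ∈ K
    · exact ⟨q, p, by rw [h, Sym2.eq_swap], hpq.symm, hq, hp⟩
    · simp [hp, hq] at h1

lemma bd_parity {ends : E → Sym2 V} (hl : NoLoops ends) (hc : IsCubic ends) (K : Finset V) :
    (bd ends K).card % 2 = K.card % 2 := by
  classical
  have h1 : ∑ e, cnt ends K e = (bd ends K).card +
      2 * ∑ e, (if cnt ends K e = 2 then 1 else 0) := by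
    unfold bd
    rw [Finset.card_filter, Finset.mul_sum, ← Finset.sum_add_distrib]
    refine Finset.sum_congr rfl fun e _ => ?_
    have := cnt_le hl K e
    interval_cases cnt ends K e <;> simp
  rw [sum_cnt hc] at h1
  omega

lemma bd_ne_one {ends : E → Sym2 V} (hl : NoLoops ends) (hb : Bridgeless ends) (K : Finset V) :
    (bd ends K).card ≠ 1 := by
  classical
  intro h
  obtain ⟨e, he⟩ := Finset.card_eq_one.1 h
  have hee : e ∈ bd ends K := by simp [he]
  obtain ⟨p, q, hpq, hne, hp, hq⟩ := cnt_one hl (by simpa [bd] using hee)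
  have := closed_component (ends := ends) (F := {f | f ≠ e}) (P := (K : Set V)) (x := p) hp (by
    intro f hf a b hab ha
    by_contra hb'
    have hne : a ≠ b := by rintro rfl; exact hb' ha
    have : f ∈ bd ends K := by
      simp only [bd, Finset.mem_filter, Finset.mem_univ, true_and]
      rw [cnt_eq K hab hne]
      have ha : a ∈ K := ha
      have hb' : b ∉ K := hb'
      simp [ha, hb']
    rw [he] at this
    exact hf (by simpa using this))
  exact hq (this (hb e p q hpq))

lemma even_card_s6 {ends : E → Sym2 V} (hl : NoLoops ends) (hc : IsCubic ends) :
    Even (Fintype.card V) := by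
  have h := bd_parity hl hc (Finset.univ)
  have : bd ends Finset.univ = ∅ := by
    rw [Finset.eq_empty_iff_forall_notMem]
    intro e he
    obtain ⟨p, q, -, -, -, hq⟩ := cnt_one hl (K := Finset.univ) (e := e) (by simpa [bd] using he)
    simp at hq
  rw [this] at h
  rw [Nat.even_iff, ← Finset.card_univ, ← h]
  simp

lemma odd_family {ends : E → Sym2 V} (hl : NoLoops ends) (hc : IsCubic ends)
    (hb : Bridgeless ends) (T : Finset V) (𝒦 : Finset (Finset V))
    (hdisj : ∀ K ∈ 𝒦, ∀ K' ∈ 𝒦, ∀ v ∈ K, v ∈ K' → K = K')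
    (hT : ∀ K ∈ 𝒦, ∀ v ∈ K, v ∉ T) (hodd : ∀ K ∈ 𝒦, Odd K.card)
    (hcl : ∀ K ∈ 𝒦, ∀ e p q, ends e = s(p, q) → p ∈ K → q ∈ K ∨ q ∈ T)
    {e₀ : E} {u v : V} (he₀ : ends e₀ = s(u, v)) (hu : u ∈ T) (hv : v ∈ T) :
    𝒦.card < T.card := by
  classical
  have h3 : ∀ K ∈ 𝒦, 3 ≤ (bd ends K).card := by
    intro K hK
    have h1 := bd_ne_one hl hb K
    have h2 := bd_parity hl hc K
    have h3 := Nat.odd_iff.1 (hodd K hK)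
    omega
  have hA : 3 * 𝒦.card ≤ ∑ K ∈ 𝒦, (bd ends K).card := by
    rw [mul_comm, ← smul_eq_mul]
    exact Finset.card_nsmul_le_sum _ _ _ h3
  have hB : ∑ K ∈ 𝒦, (bd ends K).card ≤ (bd ends T).card := by
    rw [← Finset.card_biUnion]
    · refine Finset.card_le_card ?_
      intro e he
      obtain ⟨K, hK, he⟩ := Finset.mem_biUnion.1 he
      obtain ⟨p, q, h, hne, hp, hq⟩ := cnt_one hl (K := K) (e := e) (by simpa [bd] using he)
      have hqT : q ∈ T := (hcl K hK e p q h hp).resolve_left hq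
      have hpT := hT K hK p hp
      simp only [bd, Finset.mem_filter, Finset.mem_univ, true_and]
      rw [cnt_eq T h hne]
      simp [hqT, hpT]
    · intro K hK K' hK' hne
      rw [Function.onFun, Finset.disjoint_left]
      intro e he he'
      obtain ⟨p, q, h, -, hp, hq⟩ := cnt_one hl (K := K) (e := e) (by simpa [bd] using he)
      obtain ⟨p', q', h', -, hp', hq'⟩ := cnt_one hl (K := K') (e := e) (by simpa [bd] using he')
      have hqT : q ∈ T := (hcl K hK e p q h hp).resolve_left hq
      rw [h, Sym2.eq_iff] at h'
      rcases h' with ⟨rfl, rfl⟩ | ⟨rfl, rfl⟩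
      · exact hne (hdisj K hK K' hK' _ hp hp')
      · exact hT K' hK' _ hp' hqT
  have hC : (bd ends T).card + 2 ≤ ∑ e, cnt ends T e := by
    have huv : u ≠ v := by rintro rfl; exact hl e₀ (by simp [he₀])
    have h0 : cnt ends T e₀ = 2 := by rw [cnt_eq T he₀ huv]; simp [hu, hv]
    have h0' : e₀ ∉ bd ends T := by simp [bd, h0]
    calc (bd ends T).card + 2 = ∑ e ∈ bd ends T, cnt ends T e + cnt ends T e₀ := by
          rw [h0, Finset.card_eq_sum_ones]
          congr 1
          refine Finset.sum_congr rfl fun e he => ?_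
          simp only [bd, Finset.mem_filter] at he
          exact he.2.symm
      _ = ∑ e ∈ insert e₀ (bd ends T), cnt ends T e := by
          rw [Finset.sum_insert h0', add_comm]
      _ ≤ _ := Finset.sum_le_sum_of_subset (Finset.subset_univ _)
  rw [sum_cnt hc] at hC
  omega
end count

section tutte
variable {V E : Type} [Fintype V] [Fintype E]

/-- The simple graph obtained by deleting `u` and `v`. -/
def del (ends : E → Sym2 V) (u v : V) : SimpleGraph {w : V // w ≠ u ∧ w ≠ v} where
  Adj a b := a ≠ b ∧ ∃ e, ends e = s(a.1, b.1)
  symm := ⟨fun a b h => ⟨h.1.symm, by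
    obtain ⟨e, he⟩ := h.2
    exact ⟨e, by rw [he, Sym2.eq_swap]⟩⟩⟩
  loopless := ⟨fun a h => h.1 rfl⟩

lemma no_violator {ends : E → Sym2 V} (hl : NoLoops ends) (hc : IsCubic ends)
    (hb : Bridgeless ends) {e₀ : E} {u v : V} (he₀ : ends e₀ = s(u, v))
    (S : Set {w : V // w ≠ u ∧ w ≠ v}) : ¬ (del ends u v).IsTutteViolator S := by
  classical
  intro hS
  have huv : u ≠ v := by rintro rfl; exact hl e₀ (by simp [he₀])
  unfold SimpleGraph.IsTutteViolator at hS
  set H := ((⊤ : (del ends u v).Subgraph).deleteVerts S) with hH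
  have hpar := H.coe.odd_ncard_oddComponents
  have hcardW : Nat.card {w : V // w ≠ u ∧ w ≠ v} + 2 = Fintype.card V := by
    have : Nat.card {w : V // w ≠ u ∧ w ≠ v} = ((Finset.univ : Finset V) \ {u, v}).card := by
      rw [Nat.card_eq_fintype_card, Fintype.card_subtype]
      congr 1
      ext; simp
    rw [this, Finset.card_sdiff_of_subset (Finset.subset_univ _), Finset.card_pair huv,
      Finset.card_univ]
    have : ({u, v} : Finset V).card ≤ Fintype.card V := Finset.card_le_univ _
    rw [Finset.card_pair huv] at this
    omega
  have hcardH : Nat.card H.verts + S.ncard = Nat.card {w : V // w ≠ u ∧ w ≠ v} := by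
    have h1 : H.verts = Sᶜ := by simp [hH, Set.compl_eq_univ_sdiff]
    rw [Nat.card_coe_set_eq, h1, add_comm]
    exact Set.ncard_add_ncard_compl S
  have hev := even_card_s6 hl hc
  have hge : S.ncard + 2 ≤ H.coe.oddComponents.ncard := by
    rw [Nat.odd_iff, Nat.odd_iff] at hpar
    rw [Nat.even_iff] at hev
    omega
  let φ : H.coe.ConnectedComponent → Finset V := fun C =>
    (C.supp.toFinset).image (fun w => w.1.1)
  have hφmem : ∀ C x, x ∈ φ C ↔ ∃ w : H.verts, w ∈ C.supp ∧ w.1.1 = x := by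
    intro C x; simp [φ]
  have hφinj' : ∀ C C' x, x ∈ φ C → x ∈ φ C' → C = C' := by
    intro C C' x hx hx'
    obtain ⟨w, hw, rfl⟩ := (hφmem _ _).1 hx
    obtain ⟨w', hw', h⟩ := (hφmem _ _).1 hx'
    have : w' = w := Subtype.ext (Subtype.ext h)
    subst this
    exact SimpleGraph.ConnectedComponent.eq_of_common_vertex hw hw'
  have hφinj : Function.Injective φ := by
    intro C C' h
    obtain ⟨w, hw⟩ := C.nonempty_supp
    have hw' : w.1.1 ∈ φ C := (hφmem _ _).2 ⟨w, hw, rfl⟩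
    exact hφinj' C C' _ hw' (h ▸ hw')
  let T : Finset V := insert u (insert v (S.toFinset.image Subtype.val))
  have hTcard : T.card ≤ S.ncard + 2 := by
    refine (Finset.card_insert_le _ _).trans ?_
    have h1 := Finset.card_insert_le v (S.toFinset.image Subtype.val)
    have h2 := Finset.card_image_le (s := S.toFinset) (f := Subtype.val)
    rw [← Set.ncard_eq_toFinset_card'] at h2
    omega
  have key := odd_family hl hc hb T (H.coe.oddComponents.toFinset.image φ) ?_ ?_ ?_ ?_ he₀
    (by simp [T]) (by simp [T])
  · rw [Finset.card_image_of_injective _ hφinj, ← Set.ncard_eq_toFinset_card'] at key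
    omega
  · intro K hK K' hK' x hx hx'
    obtain ⟨C, -, rfl⟩ := Finset.mem_image.1 hK
    obtain ⟨C', -, rfl⟩ := Finset.mem_image.1 hK'
    rw [hφinj' C C' x hx hx']
  · intro K hK x hx hxT
    obtain ⟨C, -, rfl⟩ := Finset.mem_image.1 hK
    obtain ⟨w, hw, rfl⟩ := (hφmem _ _).1 hx
    have hwS : w.1 ∉ S := by
      have := w.2
      simp only [hH, SimpleGraph.Subgraph.deleteVerts_verts] at this
      exact this.2
    simp only [T, Finset.mem_insert, Finset.mem_image, Set.mem_toFinset] at hxT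
    rcases hxT with h | h | ⟨t, ht, h⟩
    · exact w.1.2.1 h
    · exact w.1.2.2 h
    · exact hwS (Subtype.ext h ▸ ht)
  · intro K hK
    obtain ⟨C, hC, rfl⟩ := Finset.mem_image.1 hK
    have hC : Odd C.supp.ncard := by simpa using hC
    rw [Finset.card_image_of_injective _ (fun a b h => Subtype.ext (Subtype.ext h)),
      ← Set.ncard_eq_toFinset_card']
    exact hC
  · intro K hK e p q he hp
    obtain ⟨C, -, rfl⟩ := Finset.mem_image.1 hK
    obtain ⟨w, hw, rfl⟩ := (hφmem _ _).1 hp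
    by_cases hqT : q ∈ T
    · exact .inr hqT
    left
    simp only [T, Finset.mem_insert, Finset.mem_image, Set.mem_toFinset, not_or] at hqT
    obtain ⟨hqu, hqv, hqS⟩ := hqT
    have hqS' : (⟨q, hqu, hqv⟩ : {w : V // w ≠ u ∧ w ≠ v}) ∉ S := fun h => hqS ⟨_, h, rfl⟩
    have hqH : (⟨q, hqu, hqv⟩ : {w : V // w ≠ u ∧ w ≠ v}) ∈ H.verts := by
      simp [hH, hqS']
    have hwS : w.1 ∉ S := by
      have := w.2
      simp only [hH, SimpleGraph.Subgraph.deleteVerts_verts] at this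
      exact this.2
    have hadj : H.coe.Adj w ⟨⟨q, hqu, hqv⟩, hqH⟩ := by
      rw [SimpleGraph.Subgraph.coe_adj]
      refine SimpleGraph.Subgraph.deleteVerts_adj.2 ?_
      refine ⟨trivial, hwS, trivial, hqS', ?_⟩
      rw [SimpleGraph.Subgraph.top_adj]
      refine ⟨fun h => hl e ?_, e, he⟩
      rw [he, h]
      simp
    exact (hφmem _ _).2 ⟨_, C.mem_supp_of_adj_mem_supp hw hadj, rfl⟩

lemma exists_pm {ends : E → Sym2 V} (hl : NoLoops ends) (hc : IsCubic ends)
    (hb : Bridgeless ends) (e₀ : E) : ∃ M, IsPerfectMatching ends M ∧ e₀ ∈ M := by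
  classical
  obtain ⟨u, v, he₀, huv⟩ := exists_ends hl e₀
  obtain ⟨N, hN, hsp⟩ := SimpleGraph.tutte.2 (no_violator hl hc hb he₀)
  have hpart : ∀ w, ∃! w', N.Adj w w' := fun w => hN (hsp w)
  have hedge : ∀ s ∈ N.edgeSet, ∃ e, ends e = s.map Subtype.val := by
    intro s hs
    induction s with | _ a b
    obtain ⟨-, e, he⟩ := N.adj_sub hs
    exact ⟨e, he⟩
  have : Nonempty E := ⟨e₀⟩
  choose! g hg using hedge
  refine ⟨insert e₀ (Set.image g N.edgeSet), ?_, Set.mem_insert _ _⟩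
  have himg : ∀ s ∈ N.edgeSet, ∀ x, x ∈ ends (g s) → ∃ w ∈ s, w.1 = x := by
    intro s hs x hx
    rw [hg s hs, Sym2.mem_map] at hx
    exact hx
  have huvcase : ∀ x, x ∈ ends e₀ → ∃! e, e ∈ insert e₀ (Set.image g N.edgeSet) ∧ x ∈ ends e := by
    intro x hx
    refine ⟨e₀, ⟨Set.mem_insert _ _, hx⟩, ?_⟩
    rintro e ⟨rfl | ⟨s, hs, rfl⟩, hxe⟩
    · rfl
    · exfalso
      obtain ⟨w, -, rfl⟩ := himg s hs x hxe
      rw [he₀, Sym2.mem_iff] at hx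
      rcases hx with h | h
      · exact w.2.1 h
      · exact w.2.2 h
  intro x
  by_cases hx : x ∈ ends e₀
  · exact huvcase x hx
  have hx' : x ≠ u ∧ x ≠ v := by
    rw [he₀, Sym2.mem_iff, not_or] at hx
    exact hx
  obtain ⟨w', hw', huniq⟩ := hpart ⟨x, hx'⟩
  have hmem : s(⟨x, hx'⟩, w') ∈ N.edgeSet := hw'
  refine ⟨g s(⟨x, hx'⟩, w'), ⟨.inr ⟨_, hmem, rfl⟩, ?_⟩, ?_⟩
  · rw [hg _ hmem]; simp
  · rintro e ⟨rfl | ⟨s, hs, rfl⟩, hxe⟩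
    · exact absurd hxe hx
    · obtain ⟨w, hw, rfl⟩ := himg s hs x hxe
      obtain ⟨t, rfl⟩ := hw
      rw [huniq t hs]
end tutte
end Mg

theorem stmt6 {V E : Type} [Fintype V] [Fintype E] (ends : E → Sym2 V)
    (hl : Mg.NoLoops ends) (hc : Mg.IsCubic ends) (hb : Mg.Bridgeless ends)
    (hconn : Mg.Connected ends) (h5 : Mg.TwoFactorsAllC5 ends) :
    ¬ Mg.HasCycle ends 3 := by
  exact Mg.no_triangle hl hc h5 (Mg.exists_pm hl hc hb)
end

section
/- Let G be a connected bridgeless cubic graph in which every 2-factor consists only of 5-cycles. Then G is 3-edge-connected. -/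
namespace Mg8

open Mg

/-- Edges of `F` with exactly one end in `X`. -/
def cut {V E : Type} (ends : E → Sym2 V) (F : Set E) (X : Set V) : Set E :=
  {e | e ∈ F ∧ ∃ a ∈ X, ∃ b, b ∉ X ∧ ends e = s(a, b)}

/-- Edges of `F` with both ends in `X`. -/
def ins {V E : Type} (ends : E → Sym2 V) (F : Set E) (X : Set V) : Set E :=
  {e | e ∈ F ∧ ∀ v ∈ ends e, v ∈ X}

lemma handshake {V E : Type} [Fintype V] [Fintype E] (ends : E → Sym2 V)
    (hl : NoLoops ends) (F : Set E) (k : ℕ)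
    (hk : ∀ v, {e | e ∈ F ∧ v ∈ ends e}.ncard = k) (X : Set V) :
    k * X.ncard = 2 * (ins ends F X).ncard + (cut ends F X).ncard := by
  classical
  have h := Finset.sum_card_bipartiteAbove_eq_sum_card_bipartiteBelow
    (fun (v : V) (e : E) => v ∈ ends e) (s := X.toFinset) (t := F.toFinset)
  have h1 : ∀ v ∈ X.toFinset,
      (F.toFinset.bipartiteAbove (fun (v : V) (e : E) => v ∈ ends e) v).card = k := by
    intro v _
    rw [← hk v, ← Set.ncard_coe_finset]
    congr 1
    ext e
    simp [Finset.bipartiteAbove]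
  rw [Finset.sum_congr rfl h1] at h
  have h2 : ∀ e ∈ F.toFinset,
      (X.toFinset.bipartiteBelow (fun (v : V) (e : E) => v ∈ ends e) e).card
        = (if e ∈ ins ends F X then 2 else 0) + (if e ∈ cut ends F X then 1 else 0) := by
    intro e he
    have heF : e ∈ F := by simpa using he
    have hle := hl e
    obtain ⟨⟨a, b⟩, hab⟩ := Quot.exists_rep (ends e)
    have hab : ends e = s(a, b) := hab.symm
    have hne : a ≠ b := by
      rw [hab] at hle
      simpa using hle
    have hi : e ∈ ins ends F X ↔ (a ∈ X ∧ b ∈ X) := by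
      simp [ins, heF, hab]
    have hcu : e ∈ cut ends F X ↔ ((a ∈ X ∧ b ∉ X) ∨ (b ∈ X ∧ a ∉ X)) := by
      simp only [cut, Set.mem_ofPred_eq, heF, true_and, hab, Sym2.eq_iff]
      constructor
      · rintro ⟨a', ha', b', hb', ⟨rfl, rfl⟩ | ⟨rfl, rfl⟩⟩ <;> tauto
      · rintro (⟨h1, h2⟩ | ⟨h1, h2⟩)
        · exact ⟨a, h1, b, h2, Or.inl ⟨rfl, rfl⟩⟩
        · exact ⟨b, h1, a, h2, Or.inr ⟨rfl, rfl⟩⟩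
    have hs : X.toFinset.bipartiteBelow (fun (v : V) (e : E) => v ∈ ends e) e
        = ({a, b} : Finset V).filter (· ∈ X) := by
      ext x
      simp [Finset.bipartiteBelow, hab, and_comm]
    rw [hs, hi, hcu]
    by_cases ha : a ∈ X <;> by_cases hb : b ∈ X <;>
      simp [Finset.filter_insert, Finset.filter_singleton, ha, hb, hne]
  rw [Finset.sum_congr rfl h2, Finset.sum_add_distrib, Finset.sum_const] at h
  have e1 : (∑ e ∈ F.toFinset, if e ∈ ins ends F X then 2 else 0)
      = 2 * (ins ends F X).ncard := by
    rw [← Finset.sum_filter, Finset.sum_const, ← Set.ncard_coe_finset, smul_eq_mul, mul_comm]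
    congr 2
    ext e
    rw [Finset.mem_coe, Finset.mem_filter, Set.mem_toFinset]
    exact ⟨fun h => h.2, fun h => ⟨h.1, h⟩⟩
  have e2 : (∑ e ∈ F.toFinset, if e ∈ cut ends F X then 1 else 0)
      = (cut ends F X).ncard := by
    rw [← Finset.sum_filter, Finset.sum_const, ← Set.ncard_coe_finset, smul_eq_mul, mul_one]
    congr 1
    ext e
    rw [Finset.mem_coe, Finset.mem_filter, Set.mem_toFinset]
    exact ⟨fun h => h.2, fun h => ⟨h.1, h⟩⟩
  rw [e1, e2, smul_eq_mul, ← Set.ncard_eq_toFinset_card'] at h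
  rw [← h, mul_comm]

lemma reach_cut {V E : Type} (ends : E → Sym2 V) (F : Set E) (X : Set V) {v w : V}
    (h : Reach ends F v w) (hv : v ∈ X) (hw : w ∉ X) : ∃ e, e ∈ cut ends F X := by
  induction h with
  | refl => exact absurd hv hw
  | @tail b c hb hbc ih =>
    by_cases hbX : b ∈ X
    · obtain ⟨e, he, hee⟩ := hbc
      exact ⟨e, he, b, hbX, c, hw, hee⟩
    · exact ih hbX

lemma cut_ncard_ne_one {V E : Type} (ends : E → Sym2 V) (hb : Bridgeless ends) (X : Set V) :
    (cut ends Set.univ X).ncard ≠ 1 := by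
  intro h
  obtain ⟨e, he⟩ := Set.ncard_eq_one.1 h
  have hm : e ∈ cut ends Set.univ X := by rw [he]; rfl
  obtain ⟨-, a, ha, b, hbX, hab⟩ := hm
  obtain ⟨f, hf, hf'⟩ := reach_cut ends _ X (hb e a b hab) ha hbX
  have : f ∈ cut ends Set.univ X := ⟨trivial, hf'⟩
  rw [he] at this
  exact hf this

lemma closed_dvd {V E : Type} [Fintype V] (ends : E → Sym2 V) (F : Set E)
    (h5 : ∀ v, (component ends F v).ncard = 5) :
    ∀ (n : ℕ) (X : Set V), X.ncard = n → cut ends F X = ∅ → 5 ∣ X.ncard := by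
  intro n
  induction n using Nat.strong_induction_on with
  | _ n ih =>
    intro X hn hX
    rcases X.eq_empty_or_nonempty with rfl | ⟨x, hx⟩
    · simp
    have hCX : component ends F x ⊆ X := by
      intro y hy
      by_contra hyX
      obtain ⟨e, he⟩ := reach_cut ends F X hy hx hyX
      rw [hX] at he
      exact he
    have hd := Set.ncard_sdiff_add_ncard_of_subset hCX
    rw [h5] at hd
    have hcl : cut ends F (X \ component ends F x) = ∅ := by
      apply Set.eq_empty_of_forall_notMem
      rintro e ⟨he, a, ⟨haX, haC⟩, b, hbn, hab⟩
      by_cases hbC : b ∈ component ends F x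
      · exact haC (Relation.ReflTransGen.tail hbC ⟨e, he, by rw [hab, Sym2.eq_swap]⟩)
      · have : e ∈ cut ends F X := ⟨he, a, haX, b, fun h => hbn ⟨h, hbC⟩, hab⟩
        rw [hX] at this
        exact this
    have := ih _ (by omega) _ rfl hcl
    omega

lemma counting {V E ι : Type} [Fintype V] [Fintype E] [Fintype ι] (ends : E → Sym2 V)
    (hl : NoLoops ends) (hc : IsCubic ends) (hb : Bridgeless ends)
    (A : Set V) (e : E) (he : ∀ v ∈ ends e, v ∈ A) (T : ι → Set V)
    (hdisj : ∀ i j x, x ∈ T i → x ∈ T j → i = j)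
    (hodd : ∀ i, Odd (T i).ncard)
    (hA : ∀ i, ∀ x ∈ T i, x ∉ A)
    (hcut : ∀ i f a b, ends f = s(a, b) → a ∈ T i → b ∉ T i → b ∈ A) :
    3 * Fintype.card ι + 2 ≤ 3 * A.ncard := by
  classical
  have hk : ∀ v, {e | e ∈ (Set.univ : Set E) ∧ v ∈ ends e}.ncard = 3 := by
    intro v; simpa using hc v
  have h3 : ∀ i, 3 ≤ (cut ends Set.univ (T i)).toFinset.card := by
    intro i
    have h1 := handshake ends hl Set.univ 3 hk (T i)
    have h2 := cut_ncard_ne_one ends hb (T i)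
    obtain ⟨m, hm⟩ := hodd i
    rw [← Set.ncard_eq_toFinset_card']
    omega
  have hA1 := handshake ends hl Set.univ 3 hk A
  have hin : 0 < (ins ends Set.univ A).ncard := by
    rw [Set.ncard_pos]
    exact ⟨e, trivial, he⟩
  have hpd : ((Finset.univ : Finset ι) : Set ι).PairwiseDisjoint
      (fun i => (cut ends Set.univ (T i)).toFinset) := by
    intro i _ j _ hij
    rw [Function.onFun, Finset.disjoint_left]
    intro f hfi hfj
    rw [Set.mem_toFinset] at hfi hfj
    obtain ⟨-, a, ha, b, hb', hab⟩ := hfi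
    obtain ⟨-, c, hc', d, hd', hcd⟩ := hfj
    have hbA := hcut i f a b hab ha hb'
    have hdA := hcut j f c d hcd hc' hd'
    rw [hab, Sym2.eq_iff] at hcd
    rcases hcd with ⟨rfl, rfl⟩ | ⟨rfl, rfl⟩
    · exact hij (hdisj i j _ ha hc')
    · exact hA i _ ha hdA
  have hsub : (Finset.univ : Finset ι).biUnion (fun i => (cut ends Set.univ (T i)).toFinset)
      ⊆ (cut ends Set.univ A).toFinset := by
    intro f hf
    simp only [Finset.mem_biUnion, Finset.mem_univ, true_and, Set.mem_toFinset] at hf ⊢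
    obtain ⟨i, -, a, ha, b, hb', hab⟩ := hf
    exact ⟨trivial, b, hcut i f a b hab ha hb', a, hA i a ha, by rw [hab, Sym2.eq_swap]⟩
  have hcard := Finset.card_le_card hsub
  rw [Finset.card_biUnion hpd, ← Set.ncard_eq_toFinset_card'] at hcard
  have := Finset.card_nsmul_le_sum (Finset.univ : Finset ι)
    (fun i => (cut ends Set.univ (T i)).toFinset.card) 3 (fun i _ => h3 i)
  simp only [Finset.card_univ, smul_eq_mul] at this
  omega

/-- The underlying simple graph of `G - {u, v}`. -/
def H {V E : Type} (ends : E → Sym2 V) (u v : V) : SimpleGraph {x : V // x ≠ u ∧ x ≠ v} where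
  Adj a b := a ≠ b ∧ ∃ f, ends f = s(a.1, b.1)
  symm := ⟨fun a b h => ⟨h.1.symm, by
    obtain ⟨f, hf⟩ := h.2
    exact ⟨f, by rw [hf, Sym2.eq_swap]⟩⟩⟩
  loopless := ⟨fun a h => h.1 rfl⟩

lemma no_violator {V E : Type} [Fintype V] [Fintype E] (ends : E → Sym2 V)
    (hl : NoLoops ends) (hc : IsCubic ends) (hb : Bridgeless ends)
    (e : E) (u v : V) (huv : ends e = s(u, v)) (S : Set {x : V // x ≠ u ∧ x ≠ v}) :
    ¬ (H ends u v).IsTutteViolator S := by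
  classical
  intro hS
  have hne : u ≠ v := by
    have := hl e
    rw [huv] at this
    simpa using this
  unfold SimpleGraph.IsTutteViolator at hS
  set K := ((⊤ : (H ends u v).Subgraph).deleteVerts S) with hK
  have hpar := SimpleGraph.odd_ncard_oddComponents (G := K.coe)
  have hKv : K.verts = Sᶜ := by
    ext x; simp [hK]
  have hcK : Nat.card K.verts + S.ncard = Nat.card {x : V // x ≠ u ∧ x ≠ v} := by
    rw [Nat.card_coe_set_eq, hKv, add_comm, Set.ncard_add_ncard_compl]
  have hcW : Nat.card {x : V // x ≠ u ∧ x ≠ v} + 2 = Nat.card V := by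
    have h1 : Nat.card {x : V // x ≠ u ∧ x ≠ v} = ({u, v}ᶜ : Set V).ncard := by
      rw [← Nat.card_coe_set_eq]
      apply Nat.card_congr
      apply Equiv.subtypeEquivRight
      intro x
      simp
    rw [h1, ← Set.ncard_pair hne, add_comm, Set.ncard_add_ncard_compl]
  have hVe : Even (Nat.card V) := by
    have hk : ∀ v, {e | e ∈ (Set.univ : Set E) ∧ v ∈ ends e}.ncard = 3 := by
      intro v; simpa using hc v
    have h1 := handshake ends hl Set.univ 3 hk Set.univ
    have h2 : cut ends Set.univ (Set.univ : Set V) = ∅ := by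
      ext f; simp [cut]
    rw [h2, Set.ncard_univ, Set.ncard_empty] at h1
    rw [Nat.even_iff]
    omega
  let A : Set V := insert u (insert v (Subtype.val '' S))
  have hAc : A.ncard = S.ncard + 2 := by
    have h1 : v ∉ (Subtype.val '' S : Set V) := by
      rintro ⟨x, -, hx⟩; exact x.2.2 hx
    have h2 : u ∉ insert v (Subtype.val '' S : Set V) := by
      rintro (h | ⟨x, -, hx⟩)
      · exact hne h
      · exact x.2.1 hx
    rw [Set.ncard_insert_of_notMem h2, Set.ncard_insert_of_notMem h1,
      Set.ncard_image_of_injective _ Subtype.val_injective]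
  let g : K.verts → V := fun x => x.1.1
  have hg : Function.Injective g := fun x y h => Subtype.ext (Subtype.ext h)
  let T : K.coe.oddComponents → Set V := fun c => g '' c.1.supp
  have := counting ends hl hc hb A e (by
      intro x hx
      rw [huv, Sym2.mem_iff] at hx
      rcases hx with rfl | rfl
      · exact Or.inl rfl
      · exact Or.inr (Or.inl rfl)) T
    (by
      rintro i j x ⟨y, hy, rfl⟩ ⟨z, hz, hzy⟩
      have := hg hzy
      subst this
      apply Subtype.ext
      rw [SimpleGraph.ConnectedComponent.mem_supp_iff] at hy hz
      exact hy.symm.trans hz)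
    (by
      intro i
      have := i.2
      simp only [T]
      rw [Set.ncard_image_of_injective _ hg]
      exact this)
    (by
      rintro i x ⟨y, hy, rfl⟩ hxA
      have hyS : y.1 ∉ S := by
        exact (Set.ext_iff.1 hKv y.1).1 y.2
      rcases hxA with h | h | ⟨z, hz, hzy⟩
      · exact y.1.2.1 h
      · exact y.1.2.2 h
      · exact hyS (by rwa [← (Subtype.ext hzy : z = y.1)]))
    (by
      rintro i f a b hf ⟨y, hy, rfl⟩ hbT
      by_contra hbA
      have hbu : b ≠ u := fun h => hbA (Or.inl h)
      have hbv : b ≠ v := fun h => hbA (Or.inr (Or.inl h))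
      have hbS : (⟨b, hbu, hbv⟩ : {x : V // x ≠ u ∧ x ≠ v}) ∉ S :=
        fun h => hbA (Or.inr (Or.inr ⟨_, h, rfl⟩))
      have hbK : (⟨b, hbu, hbv⟩ : {x : V // x ≠ u ∧ x ≠ v}) ∈ K.verts := by
        rw [hKv]; exact hbS
      have hyS : y.1 ∉ S := by
        exact (Set.ext_iff.1 hKv y.1).1 y.2
      apply hbT
      refine ⟨⟨_, hbK⟩, ?_, rfl⟩
      have hadj : K.coe.Adj y ⟨_, hbK⟩ := by
        have hH : (H ends u v).Adj y.1 ⟨b, hbu, hbv⟩ := by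
          refine ⟨?_, f, hf⟩
          intro h
          have h' := hl f
          rw [hf] at h'
          apply h'
          have : g y = b := congrArg Subtype.val h
          simp [this]
        simp [hK, hyS, hbS, hH]
      rw [SimpleGraph.ConnectedComponent.mem_supp_iff] at hy ⊢
      rw [← hy]
      exact (SimpleGraph.ConnectedComponent.connectedComponentMk_eq_of_adj hadj).symm)
  rw [← Nat.card_eq_fintype_card, Nat.card_coe_set_eq, hAc] at this
  rw [Nat.odd_iff, Nat.odd_iff] at hpar
  rw [Nat.even_iff] at hVe
  omega

lemma exists_matching {V E : Type} [Fintype V] [Fintype E] (ends : E → Sym2 V)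
    (hl : NoLoops ends) (hc : IsCubic ends) (hb : Bridgeless ends) (e : E) :
    ∃ M, IsPerfectMatching ends M ∧ e ∈ M := by
  classical
  obtain ⟨⟨u, v⟩, huv⟩ := Quot.exists_rep (ends e)
  have huv : ends e = s(u, v) := huv.symm
  obtain ⟨N, hN⟩ := SimpleGraph.tutte.2 (no_violator ends hl hc hb e u v huv)
  rw [SimpleGraph.Subgraph.isPerfectMatching_iff] at hN
  have : ∀ p : Sym2 V, ∃ f, (∃ f', ends f' = p) → ends f = p := by
    intro p
    by_cases h : ∃ f', ends f' = p
    · obtain ⟨f, hf⟩ := h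
      exact ⟨f, fun _ => hf⟩
    · exact ⟨e, fun h' => absurd h' h⟩
  choose φ hφ using this
  have hφN : ∀ x y, N.Adj x y → ends (φ s(x.1, y.1)) = s(x.1, y.1) :=
    fun x y h => hφ _ (N.adj_sub h).2
  refine ⟨insert e {f | ∃ x y, N.Adj x y ∧ f = φ s(x.1, y.1)}, ?_, Or.inl rfl⟩
  intro w
  by_cases hw : w ≠ u ∧ w ≠ v
  · obtain ⟨y, hy, hyu⟩ := hN ⟨w, hw⟩
    refine ⟨φ s(w, y.1), ⟨Or.inr ⟨_, _, hy, rfl⟩, ?_⟩, ?_⟩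
    · rw [hφN _ _ hy]; simp
    · rintro f ⟨rfl | ⟨a, b, hab, rfl⟩, hwf⟩
      · rw [huv, Sym2.mem_iff] at hwf
        tauto
      · rw [hφN _ _ hab, Sym2.mem_iff] at hwf
        rcases hwf with rfl | rfl
        · rw [hyu b hab]
        · rw [hyu a hab.symm, Sym2.eq_swap]
  · have hw' : w ∈ ends e := by
      rw [huv, Sym2.mem_iff]; tauto
    refine ⟨e, ⟨Or.inl rfl, hw'⟩, ?_⟩
    rintro f ⟨rfl | ⟨a, b, hab, rfl⟩, hwf⟩
    · rfl
    · rw [hφN _ _ hab, Sym2.mem_iff] at hwf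
      exfalso
      rcases hwf with rfl | rfl
      · exact hw a.2
      · exact hw b.2

lemma compl_twoFactor {V E : Type} [Fintype E] (ends : E → Sym2 V)
    (hc : IsCubic ends) (M : Set E) (hM : IsPerfectMatching ends M) :
    IsTwoFactor ends Mᶜ := by
  intro v
  obtain ⟨m, ⟨hm, hmv⟩, hu⟩ := hM v
  have : {e | e ∈ Mᶜ ∧ v ∈ ends e} = {e | v ∈ ends e} \ {m} := by
    ext f
    simp only [Set.mem_ofPred_eq, Set.mem_compl_iff, Set.mem_sdiff, Set.mem_singleton_iff]
    constructor
    · rintro ⟨h1, h2⟩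
      exact ⟨h2, fun h => h1 (h ▸ hm)⟩
    · rintro ⟨h1, h2⟩
      exact ⟨fun h => h2 (hu f ⟨h, h1⟩), h1⟩
  rw [this, Set.ncard_sdiff_singleton_of_mem (by exact hmv), hc v]

end Mg8

theorem stmt8 {V E : Type} [Fintype V] [Fintype E] (ends : E → Sym2 V)
    (hl : Mg.NoLoops ends) (hc : Mg.IsCubic ends) (hb : Mg.Bridgeless ends)
    (hconn : Mg.Connected ends) (h5 : Mg.TwoFactorsAllC5 ends) :
    ∀ e₁ e₂ : E, ∀ v w : V, Mg.Reach ends {f | f ≠ e₁ ∧ f ≠ e₂} v w := by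
  classical
  intro e₁ e₂ v w
  by_contra hvw
  let S : Set V := {x | Mg.Reach ends {f | f ≠ e₁ ∧ f ≠ e₂} v x}
  have hvS : v ∈ S := Relation.ReflTransGen.refl
  have hwS : w ∉ S := hvw
  have hcutS : ∀ f ∈ Mg8.cut ends Set.univ S, f = e₁ ∨ f = e₂ := by
    rintro f ⟨-, a, ha, b, hb', hab⟩
    by_contra hf
    push Not at hf
    exact hb' (Relation.ReflTransGen.tail ha ⟨f, hf, hab⟩)
  obtain ⟨e, he⟩ := Mg8.reach_cut ends Set.univ S (hconn v w) hvS hwS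
  obtain ⟨e', he'⟩ : ∃ e', ∀ f ∈ Mg8.cut ends Set.univ S, f = e ∨ f = e' := by
    rcases hcutS e he with rfl | rfl
    · exact ⟨e₂, hcutS⟩
    · exact ⟨e₁, fun f hf => (hcutS f hf).symm⟩
  have key : ∀ F : Set E, Mg.IsTwoFactor ends F → ∀ X : Set V,
      (∀ f ∈ Mg8.cut ends F X, f = e') → 5 ∣ X.ncard := by
    intro F hF X hX
    have h1 := Mg8.handshake ends hl F 2 hF X
    have h2 : (Mg8.cut ends F X).ncard ≤ 1 := by
      rw [Set.ncard_le_one_iff]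
      intro a b ha hb'
      rw [hX a ha, hX b hb']
    have h3 : (Mg8.cut ends F X).ncard = 0 := by omega
    exact Mg8.closed_dvd ends F (h5 F hF) _ X rfl ((Set.ncard_eq_zero).1 h3)
  obtain ⟨-, a, ha, b, hbS, hab⟩ := he
  have hdvd : 5 ∣ S.ncard := by
    obtain ⟨M, hM, heM⟩ := Mg8.exists_matching ends hl hc hb e
    apply key _ (Mg8.compl_twoFactor ends hc M hM)
    rintro f ⟨hfM, hf⟩
    rcases he' f ⟨trivial, hf⟩ with rfl | h
    · exact absurd heM hfM
    · exact h
  obtain ⟨g, hg, hge⟩ : ∃ g, a ∈ ends g ∧ g ≠ e := by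
    have h3 : 1 < {f | a ∈ ends f}.ncard := by rw [hc a]; norm_num
    exact Set.exists_ne_of_one_lt_ncard h3 e
  obtain ⟨M, hM, hgM⟩ := Mg8.exists_matching ends hl hc hb g
  have heM : e ∉ M := fun h =>
    hge ((hM a).unique ⟨hgM, hg⟩ ⟨h, by rw [hab]; simp⟩)
  have hF := Mg8.compl_twoFactor ends hc M hM
  set C := Mg.component ends Mᶜ a with hC
  have haC : a ∈ C := Relation.ReflTransGen.refl
  have hbC : b ∈ C := Relation.ReflTransGen.single ⟨e, heM, hab⟩
  have hd2 : 5 ∣ (S \ C).ncard := by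
    apply key _ hF
    rintro f ⟨hfM, x, ⟨hxS, hxC⟩, y, hy, hxy⟩
    have hyC : y ∉ C := fun h =>
      hxC (Relation.ReflTransGen.tail h ⟨f, hfM, by rw [hxy, Sym2.eq_swap]⟩)
    have hyS : y ∉ S := fun h => hy ⟨h, hyC⟩
    rcases he' f ⟨trivial, x, hxS, y, hyS, hxy⟩ with rfl | h
    · rw [hab, Sym2.eq_iff] at hxy
      rcases hxy with ⟨rfl, rfl⟩ | ⟨rfl, rfl⟩
      · exact absurd haC hxC
      · exact absurd hbC hxC
    · exact h
  have hsum := Set.ncard_inter_add_ncard_sdiff_eq_ncard S C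
  have hpos : 0 < (S ∩ C).ncard := by
    rw [Set.ncard_pos]
    exact ⟨a, ha, haC⟩
  have hlt : (S ∩ C).ncard < C.ncard :=
    Set.ncard_lt_ncard ⟨Set.inter_subset_right, fun h => hbS (h hbC).1⟩
  rw [hC, h5 _ hF a, ← hC] at hlt
  omega
end
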